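/- arXiv:math/0603303 — 3 statements merged into one kernel-verified Lean document; each statement's English description precedes it below -/
import Mathlib

section
/- Let α > 0. For every λ ∈ ℝ the improper Riemann integral F(λ) := lim_{R→∞} ∫_{−R}^{R} sgn(ξ) e^{−i·sgn(ξ)·π/4} |ξ|^{−1/2} e^{i(λξ + ξ|ξ|^α)} dξ exists; the function F : ℝ → ℂ is continuous, and F(λ) → 0 as |λ| → ∞. -/
open MeasureTheory Filter

/-- The partial integral
`∫_{-R}^{R} sgn ξ · e^{-i·sgn ξ·π/4} |ξ|^{-1/2} e^{i(λξ + ξ|ξ|^α)} dξ`. -/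
noncomputable def Fpartial (α l R : ℝ) : ℂ :=
  ∫ ξ in (-R)..R,
    (Real.sign ξ : ℂ) *
      Complex.exp (-Complex.I * (Real.sign ξ : ℂ) * ((Real.pi / 4 : ℝ) : ℂ)) *
      ((|ξ| ^ (-(2⁻¹) : ℝ) : ℝ) : ℂ) *
      Complex.exp (Complex.I * ((l * ξ + ξ * |ξ| ^ α : ℝ) : ℂ))

/-!
The half-line integrals `∫₀ᴿ x^{-1/2} e^{i(λx + x·x^α)} dx` are, as functions of `λ`, Fourier
transforms of integrable functions, hence elements of the complete space `C₀(ℝ, ℂ)` by the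
Riemann–Lebesgue lemma. The second derivative of the phase does not depend on `λ`, so van der
Corput's second-derivative test bounds the tails `∫_P^R` by a multiple of `P^{-min(α, 1)/2}`
uniformly in `λ`. The half-line integrals are therefore Cauchy in `C₀(ℝ, ℂ)` as `R → ∞`, and their
limit gives existence, continuity and decay at once. The negative half-line contributes minus the
complex conjugate of the positive one.
-/

open Set Complex
open scoped Topology ZeroAtInfty ComplexConjugate

section VanDerCorput

variable {φ φ' φ'' : ℝ → ℝ} {p q : ℝ}

lemma continuousOn_exp_I_mul (hφ : ∀ x ∈ Icc p q, HasDerivAt φ (φ' x) x) :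
    ContinuousOn (fun x ↦ exp (I * φ x)) (Icc p q) := fun x hx ↦
  ((hφ x hx).ofReal_comp.const_mul I).cexp.continuousAt.continuousWithinAt

lemma intervalIntegrable_exp_I_mul (hφ : ∀ x ∈ Icc p q, HasDerivAt φ (φ' x) x) {a b : ℝ}
    (ha : a ∈ Icc p q) (hb : b ∈ Icc p q) :
    IntervalIntegrable (fun x ↦ exp (I * φ x)) volume a b :=
  ((continuousOn_exp_I_mul hφ).mono (uIcc_subset_Icc ha hb)).intervalIntegrable

lemma norm_integral_exp_I_mul_le (φ : ℝ → ℝ) (a b : ℝ) :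
    ‖∫ x in a..b, exp (I * φ x)‖ ≤ |b - a| := by
  simpa only [one_mul] using intervalIntegral.norm_integral_le_of_norm_le_const
    fun x _ ↦ (norm_exp_I_mul_ofReal (φ x)).le

lemma intervalIntegrable_deriv_inv (hpq : p ≤ q) (hφ' : ∀ x ∈ Icc p q, HasDerivAt φ' (φ'' x) x)
    (hφ'' : ∀ x ∈ Icc p q, 0 ≤ φ'' x) (hne : ∀ x ∈ Icc p q, φ' x ≠ 0) :
    IntervalIntegrable (fun x ↦ -φ'' x / φ' x ^ 2) volume p q := by
  have hinv (x) (hx : x ∈ Icc p q) : HasDerivAt (fun y ↦ -(φ' y)⁻¹) (φ'' x / φ' x ^ 2) x := by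
    simpa only [neg_div, neg_neg] using ((hφ' x hx).fun_inv (hne x hx)).fun_neg
  have hneg : IntervalIntegrable (fun x ↦ φ'' x / φ' x ^ 2) volume p q := by
    refine intervalIntegral.intervalIntegrable_deriv_of_nonneg (g := fun y ↦ -(φ' y)⁻¹) ?_ ?_ ?_ <;>
      simp only [uIcc_of_le hpq, min_eq_left hpq, max_eq_right hpq]
    · exact fun x hx ↦ (hinv x hx).continuousAt.continuousWithinAt
    · exact fun x hx ↦ hinv x (Ioo_subset_Icc_self hx)
    · exact fun x hx ↦ div_nonneg (hφ'' x (Ioo_subset_Icc_self hx)) (sq_nonneg _)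
  exact hneg.neg.congr fun x _ ↦ (neg_div _ _).symm

lemma I_mul_integral_exp_eq_sub_integral (hpq : p ≤ q)
    (hφ : ∀ x ∈ Icc p q, HasDerivAt φ (φ' x) x) (hφ' : ∀ x ∈ Icc p q, HasDerivAt φ' (φ'' x) x)
    (hne : ∀ x ∈ Icc p q, φ' x ≠ 0)
    (hint : IntervalIntegrable (fun x ↦ -φ'' x / φ' x ^ 2) volume p q) :
    I * ∫ x in p..q, exp (I * φ x) = (φ' q)⁻¹ • exp (I * φ q) -
      (φ' p)⁻¹ • exp (I * φ p) - ∫ x in p..q, (-φ'' x / φ' x ^ 2) • exp (I * φ x) := by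
  have hexp_int : IntervalIntegrable (fun x ↦ exp (I * φ x) * (I * φ' x)) volume p q :=
    ContinuousOn.intervalIntegrable_of_Icc hpq ((continuousOn_exp_I_mul hφ).mul
      (continuousOn_const.mul fun x hx ↦ (hφ' x hx).ofReal_comp.continuousAt.continuousWithinAt))
  have parts := intervalIntegral.integral_smul_deriv_eq_deriv_smul (a := p) (b := q)
    (u := fun x ↦ (φ' x)⁻¹) (v := fun x ↦ exp (I * φ x))
    (fun x hx ↦ (hφ' x (by rwa [uIcc_of_le hpq] at hx)).fun_inv
      (hne x (by rwa [uIcc_of_le hpq] at hx)))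
    (fun x hx ↦ ((hφ x (by rwa [uIcc_of_le hpq] at hx)).ofReal_comp.const_mul I).cexp)
    hint hexp_int
  rw [← parts, ← intervalIntegral.integral_const_mul]
  refine intervalIntegral.integral_congr fun x hx ↦ ?_
  rw [uIcc_of_le hpq] at hx
  have : (φ' x : ℂ) ≠ 0 := ofReal_ne_zero.2 (hne x hx)
  simp only [real_smul, ofReal_inv]
  field_simp

lemma norm_integral_deriv_inv_smul_exp_le (hpq : p ≤ q)
    (hφ' : ∀ x ∈ Icc p q, HasDerivAt φ' (φ'' x) x)
    (hφ'' : ∀ x ∈ Icc p q, 0 ≤ φ'' x) (hne : ∀ x ∈ Icc p q, φ' x ≠ 0) :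
    ‖∫ x in p..q, (-φ'' x / φ' x ^ 2) • exp (I * φ x)‖ ≤ (φ' p)⁻¹ - (φ' q)⁻¹ := by
  have hint := intervalIntegrable_deriv_inv hpq hφ' hφ'' hne
  have ftc : ∫ x in p..q, -φ'' x / φ' x ^ 2 = (φ' q)⁻¹ - (φ' p)⁻¹ :=
    intervalIntegral.integral_eq_sub_of_hasDerivAt (f := fun x ↦ (φ' x)⁻¹)
      (fun x hx ↦ (hφ' x (by rwa [uIcc_of_le hpq] at hx)).fun_inv
        (hne x (by rwa [uIcc_of_le hpq] at hx))) hint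
  rw [← neg_sub, ← ftc, ← intervalIntegral.integral_neg]
  refine intervalIntegral.norm_integral_le_of_norm_le hpq (.of_forall fun x hx ↦ ?_) hint.neg
  have := hφ'' x (Ioc_subset_Icc_self hx)
  rw [norm_smul, norm_exp_I_mul_ofReal, mul_one, Real.norm_of_nonpos]
  rw [neg_div, neg_nonpos]
  positivity

theorem norm_integral_exp_le_of_le_abs_deriv {m : ℝ} (hpq : p ≤ q) (hm : 0 < m)
    (hφ : ∀ x ∈ Icc p q, HasDerivAt φ (φ' x) x) (hφ' : ∀ x ∈ Icc p q, HasDerivAt φ' (φ'' x) x)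
    (hφ'' : ∀ x ∈ Icc p q, 0 ≤ φ'' x) (hmφ' : ∀ x ∈ Icc p q, m ≤ |φ' x|) :
    ‖∫ x in p..q, exp (I * φ x)‖ ≤ 4 / m := by
  have hne (x) (hx : x ∈ Icc p q) : φ' x ≠ 0 := abs_pos.1 (hm.trans_le (hmφ' x hx))
  have hinv_le (x) (hx : x ∈ Icc p q) : |(φ' x)⁻¹| ≤ 1 / m := by
    rw [abs_inv, ← one_div]
    exact one_div_le_one_div_of_le hm (hmφ' x hx)
  have hp := hinv_le p ⟨le_rfl, hpq⟩
  have hq := hinv_le q ⟨hpq, le_rfl⟩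
  calc ‖∫ x in p..q, exp (I * φ x)‖ = ‖I * ∫ x in p..q, exp (I * φ x)‖ := by
        rw [norm_mul, norm_I, one_mul]
    _ ≤ ‖(φ' q)⁻¹ • exp (I * φ q)‖ + ‖(φ' p)⁻¹ • exp (I * φ p)‖ + ((φ' p)⁻¹ - (φ' q)⁻¹) := by
        rw [I_mul_integral_exp_eq_sub_integral hpq hφ hφ' hne
          (intervalIntegrable_deriv_inv hpq hφ' hφ'' hne)]
        exact (norm_sub_le _ _).trans (add_le_add (norm_sub_le _ _)
          (norm_integral_deriv_inv_smul_exp_le hpq hφ' hφ'' hne))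
    _ = |(φ' q)⁻¹| + |(φ' p)⁻¹| + ((φ' p)⁻¹ - (φ' q)⁻¹) := by
        simp only [norm_smul, norm_exp_I_mul_ofReal, mul_one, Real.norm_eq_abs]
    _ ≤ 1 / m + 1 / m + (1 / m + 1 / m) := by
        linarith [le_abs_self (φ' p)⁻¹, neg_abs_le (φ' q)⁻¹]
    _ = 4 / m := by ring

lemma exists_forall_mul_abs_sub_le_abs {f f' : ℝ → ℝ} {κ : ℝ} (hpq : p ≤ q)
    (hf : ∀ x ∈ Icc p q, HasDerivAt f (f' x) x) (hf' : ∀ x ∈ Icc p q, κ ≤ f' x) :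
    ∃ z ∈ Icc p q, ∀ x ∈ Icc p q, κ / 2 * |x - z| ≤ |f x| := by
  have hcont : ContinuousOn f (Icc p q) := fun x hx ↦ (hf x hx).continuousAt.continuousWithinAt
  have hslope {x y} (hx : x ∈ Icc p q) (hy : y ∈ Icc p q) (hxy : x ≤ y) :
      κ * (y - x) ≤ f y - f x := by
    refine (convex_Icc p q).mul_sub_le_image_sub_of_le_deriv hcont ?_ ?_ x hx y hy hxy
    · exact fun w hw ↦ (hf w (interior_subset hw)).differentiableAt.differentiableWithinAt
    · intro w hw
      rw [(hf w (interior_subset hw)).deriv]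
      exact hf' w (interior_subset hw)
  obtain ⟨z, hz, hmin⟩ := isCompact_Icc.exists_isMinOn (nonempty_Icc.2 hpq) hcont.abs
  refine ⟨z, hz, fun x hx ↦ ?_⟩
  have hfz : |f z| ≤ |f x| := hmin hx
  have : κ * |x - z| ≤ |f x - f z| := by
    rcases le_total x z with h | h
    · rw [abs_of_nonpos (sub_nonpos.2 h), neg_sub, abs_sub_comm]
      exact (hslope hx hz h).trans (le_abs_self _)
    · rw [abs_of_nonneg (sub_nonneg.2 h)]
      exact (hslope hz hx h).trans (le_abs_self _)
  linarith [abs_sub (f x) (f z)]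

lemma norm_integral_exp_le_of_le_abs_sub {κ δ z : ℝ} (hpq : p ≤ q) (hκ : 0 < κ)
    (hδ : 0 < δ) (hφ : ∀ x ∈ Icc p q, HasDerivAt φ (φ' x) x)
    (hφ' : ∀ x ∈ Icc p q, HasDerivAt φ' (φ'' x) x) (hφ'' : ∀ x ∈ Icc p q, 0 ≤ φ'' x)
    (hz : ∀ x ∈ Icc p q, κ / 2 * |x - z| ≤ |φ' x|) (hzδ : ∀ x ∈ Ioo p q, δ ≤ |x - z|) :
    ‖∫ x in p..q, exp (I * φ x)‖ ≤ 8 / (κ * δ) := by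
  rcases hpq.eq_or_lt with rfl | hlt
  · rw [intervalIntegral.integral_same, norm_zero]
    positivity
  have hzδ_Icc (x) (hx : x ∈ Icc p q) : δ ≤ |x - z| := by
    rw [← closure_Ioo hlt.ne] at hx
    exact le_on_closure hzδ continuousOn_const (by fun_prop) hx
  calc ‖∫ x in p..q, exp (I * φ x)‖ ≤ 4 / (κ / 2 * δ) :=
        norm_integral_exp_le_of_le_abs_deriv hpq (by positivity) hφ hφ' hφ'' fun x hx ↦
          (mul_le_mul_of_nonneg_left (hzδ_Icc x hx) (by positivity)).trans (hz x hx)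
    _ = 8 / (κ * δ) := by field_simp; norm_num

lemma norm_integral_exp_le_add_of_mul_abs_sub_le_abs_deriv {κ δ z : ℝ} (hz : z ∈ Icc p q)
    (hκ : 0 < κ) (hδ : 0 < δ) (hφ : ∀ x ∈ Icc p q, HasDerivAt φ (φ' x) x)
    (hφ' : ∀ x ∈ Icc p q, HasDerivAt φ' (φ'' x) x) (hφ'' : ∀ x ∈ Icc p q, 0 ≤ φ'' x)
    (hφz : ∀ x ∈ Icc p q, κ / 2 * |x - z| ≤ |φ' x|) :
    ‖∫ x in p..q, exp (I * φ x)‖ ≤ 8 / (κ * δ) + 2 * δ + 8 / (κ * δ) := by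
  have hpq : p ≤ q := hz.1.trans hz.2
  have hp : p ∈ Icc p q := ⟨le_rfl, hpq⟩
  have hq : q ∈ Icc p q := ⟨hpq, le_rfl⟩
  have hu : max p (z - δ) ∈ Icc p q := ⟨le_max_left _ _, max_le hpq (by linarith [hz.2])⟩
  have hv : min q (z + δ) ∈ Icc p q := ⟨le_min hpq (by linarith [hz.1]), min_le_left _ _⟩
  have far {a b : ℝ} (ha : a ∈ Icc p q) (hb : b ∈ Icc p q) (hab : a ≤ b)
      (h : ∀ x ∈ Ioo a b, δ ≤ |x - z|) : ‖∫ x in a..b, exp (I * φ x)‖ ≤ 8 / (κ * δ) := by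
    have hsub : Icc a b ⊆ Icc p q := Icc_subset_Icc ha.1 hb.2
    exact norm_integral_exp_le_of_le_abs_sub hab hκ hδ (fun x hx ↦ hφ x (hsub hx))
      (fun x hx ↦ hφ' x (hsub hx)) (fun x hx ↦ hφ'' x (hsub hx)) (fun x hx ↦ hφz x (hsub hx)) h
  have left : ‖∫ x in p..max p (z - δ), exp (I * φ x)‖ ≤ 8 / (κ * δ) :=
    far hp hu hu.1 fun x hx ↦ le_abs'.2 <| .inl <| by
      linarith [(lt_max_iff.1 hx.2).resolve_left hx.1.not_gt]
  have right : ‖∫ x in min q (z + δ)..q, exp (I * φ x)‖ ≤ 8 / (κ * δ) :=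
    far hv hq hv.2 fun x hx ↦ le_abs'.2 <| .inr <| by
      linarith [(min_lt_iff.1 hx.1).resolve_left hx.2.not_gt]
  have near : ‖∫ x in max p (z - δ)..min q (z + δ), exp (I * φ x)‖ ≤ 2 * δ := by
    have hle : max p (z - δ) ≤ min q (z + δ) :=
      (max_le hz.1 (by linarith)).trans (le_min hz.2 (by linarith))
    calc _ ≤ min q (z + δ) - max p (z - δ) :=
          (norm_integral_exp_I_mul_le φ _ _).trans_eq (abs_of_nonneg (sub_nonneg.2 hle))
      _ ≤ (z + δ) - (z - δ) := sub_le_sub (min_le_right _ _) (le_max_right _ _)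
      _ = 2 * δ := by ring
  rw [← intervalIntegral.integral_add_adjacent_intervals
      (intervalIntegrable_exp_I_mul hφ hp hv) (intervalIntegrable_exp_I_mul hφ hv hq),
    ← intervalIntegral.integral_add_adjacent_intervals
      (intervalIntegrable_exp_I_mul hφ hp hu) (intervalIntegrable_exp_I_mul hφ hu hv)]
  exact norm_add₃_le.trans (add_le_add_three left near right)

theorem norm_integral_exp_le_of_le_deriv_deriv {κ : ℝ} (hpq : p ≤ q) (hκ : 0 < κ)
    (hφ : ∀ x ∈ Icc p q, HasDerivAt φ (φ' x) x) (hφ' : ∀ x ∈ Icc p q, HasDerivAt φ' (φ'' x) x)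
    (hκφ'' : ∀ x ∈ Icc p q, κ ≤ φ'' x) :
    ‖∫ x in p..q, exp (I * φ x)‖ ≤ 12 / √κ := by
  obtain ⟨z, hz, hφz⟩ := exists_forall_mul_abs_sub_le_abs hpq hφ' hκφ''
  calc ‖∫ x in p..q, exp (I * φ x)‖ ≤ 8 / (κ * (2 / √κ)) + 2 * (2 / √κ) + 8 / (κ * (2 / √κ)) :=
        norm_integral_exp_le_add_of_mul_abs_sub_le_abs_deriv hz hκ (by positivity) hφ hφ'
          (fun x hx ↦ hκ.le.trans (hκφ'' x hx)) hφz
    _ = 8 / (√κ * √κ * (2 / √κ)) + 2 * (2 / √κ) + 8 / (√κ * √κ * (2 / √κ)) := by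
        rw [Real.mul_self_sqrt hκ.le]
    _ = 12 / √κ := by
        field_simp
        norm_num

end VanDerCorput

section RpowWeight

variable {E : Type*} [NormedAddCommGroup E] [NormedSpace ℝ E] {f : ℝ → E} {p q r s C : ℝ}

lemma integral_rpow_neg_smul_eq_sub_integral [CompleteSpace E] (hp : 0 < p) (hpq : p ≤ q)
    (hf : ContinuousOn f (Icc p q)) (r : ℝ) :
    ∫ x in p..q, x ^ (-r) • f x =
      q ^ (-r) • (∫ t in p..q, f t) - ∫ x in p..q, (-r * x ^ (-r - 1)) • ∫ t in p..x, f t := by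
  have hweight (x) (hx : x ∈ Icc p q) :
      HasDerivAt (fun y : ℝ ↦ y ^ (-r)) (-r * x ^ (-r - 1)) x :=
    Real.hasDerivAt_rpow_const (.inl (hp.trans_le hx.1).ne')
  have hweight_int : IntervalIntegrable (fun x : ℝ ↦ -r * x ^ (-r - 1)) volume p q :=
    (intervalIntegral.intervalIntegrable_rpow
      (.inr (notMem_uIcc_of_lt hp (hp.trans_le hpq)))).const_mul _
  have hprim : ContinuousOn (fun x ↦ ∫ t in p..x, f t) (uIcc p q) :=
    intervalIntegral.continuousOn_primitive_interval
      (by rw [uIcc_of_le hpq]; exact hf.integrableOn_Icc)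
  have hprim_deriv (x) (hx : x ∈ Ioo p q) : HasDerivAt (fun u ↦ ∫ t in p..u, f t) (f x) x := by
    refine intervalIntegral.integral_hasDerivAt_right ?_ ?_ ?_
    · exact (hf.mono (Icc_subset_Icc_right hx.2.le)).intervalIntegrable_of_Icc hx.1.le
    · exact (hf.mono Ioo_subset_Icc_self).stronglyMeasurableAtFilter isOpen_Ioo x hx
    · exact hf.continuousAt (Icc_mem_nhds hx.1 hx.2)
  rw [intervalIntegral.integral_smul_deriv_eq_deriv_smul_of_hasDerivAt
    (u := fun x : ℝ ↦ x ^ (-r)) (v := fun x ↦ ∫ t in p..x, f t)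
    (fun x hx ↦ (hweight x (by rwa [uIcc_of_le hpq] at hx)).continuousAt.continuousWithinAt)
    hprim (fun x hx ↦ hweight x ?_) (fun x hx ↦ hprim_deriv x ?_)
    hweight_int (hf.intervalIntegrable_of_Icc hpq)]
  · rw [intervalIntegral.integral_same, smul_zero, sub_zero]
  · rw [min_eq_left hpq, max_eq_right hpq] at hx
    exact Ioo_subset_Icc_self hx
  · rwa [min_eq_left hpq, max_eq_right hpq] at hx

lemma norm_integral_rpow_smul_le_of_norm_le_rpow (hp : 0 < p) (hpq : p ≤ q) (hr : 0 ≤ r)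
    (hsr : s < r) (hC : ∀ x ∈ Icc p q, ‖f x‖ ≤ C * x ^ s) :
    ‖∫ x in p..q, (-r * x ^ (-r - 1)) • f x‖ ≤
      C * (r / (r - s)) * (p ^ (s - r) - q ^ (s - r)) := by
  have hzero : (0 : ℝ) ∉ uIcc p q := notMem_uIcc_of_lt hp (hp.trans_le hpq)
  have hbound (x) (hx : x ∈ Ioc p q) :
      ‖(-r * x ^ (-r - 1)) • f x‖ ≤ C * r * x ^ (s - r - 1) := by
    have hx0 : 0 < x := hp.trans hx.1
    calc ‖(-r * x ^ (-r - 1)) • f x‖ ≤ r * x ^ (-r - 1) * (C * x ^ s) := by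
          rw [norm_smul, norm_mul, norm_neg, Real.norm_of_nonneg hr,
            Real.norm_of_nonneg (by positivity)]
          gcongr
          exact hC x (Ioc_subset_Icc_self hx)
      _ = C * r * x ^ (s - r - 1) := by
          rw [show s - r - 1 = (-r - 1) + s by ring, Real.rpow_add hx0]
          ring
  refine (intervalIntegral.norm_integral_le_of_norm_le hpq (.of_forall hbound)
    ((intervalIntegral.intervalIntegrable_rpow (.inr hzero)).const_mul _)).trans_eq ?_
  rw [intervalIntegral.integral_const_mul, integral_rpow (.inr ⟨by linarith, hzero⟩),
    sub_add_cancel, ← neg_sub r s, div_neg, ← neg_div, neg_sub]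
  ring

theorem norm_integral_rpow_neg_smul_le [CompleteSpace E] (hp : 0 < p) (hpq : p ≤ q)
    (hs : 0 ≤ s) (hsr : s < r) (hf : ContinuousOn f (Icc p q))
    (hC : ∀ x ∈ Icc p q, ‖∫ t in p..x, f t‖ ≤ C * x ^ s) :
    ‖∫ x in p..q, x ^ (-r) • f x‖ ≤ C * (r / (r - s)) * p ^ (s - r) := by
  have hq : 0 < q := hp.trans_le hpq
  have hC0 : 0 ≤ C := nonneg_of_mul_nonneg_left
    ((norm_nonneg _).trans (hC p ⟨le_rfl, hpq⟩)) (Real.rpow_pos_of_pos hp s)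
  have boundary : ‖q ^ (-r) • ∫ t in p..q, f t‖ ≤ C * q ^ (s - r) := by
    calc ‖q ^ (-r) • ∫ t in p..q, f t‖ ≤ q ^ (-r) * (C * q ^ s) := by
          rw [norm_smul, Real.norm_of_nonneg (by positivity)]
          gcongr
          exact hC q ⟨hpq, le_rfl⟩
      _ = C * q ^ (s - r) := by rw [sub_eq_add_neg, Real.rpow_add hq]; ring
  have hone : 1 ≤ r / (r - s) := by
    rw [one_le_div (sub_pos.2 hsr)]
    linarith
  calc ‖∫ x in p..q, x ^ (-r) • f x‖
      ≤ C * q ^ (s - r) + C * (r / (r - s)) * (p ^ (s - r) - q ^ (s - r)) := by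
        rw [integral_rpow_neg_smul_eq_sub_integral hp hpq hf]
        exact (norm_sub_le _ _).trans (add_le_add boundary
          (norm_integral_rpow_smul_le_of_norm_le_rpow hp hpq (hs.trans hsr.le) hsr hC))
    _ ≤ C * (r / (r - s)) * q ^ (s - r) + C * (r / (r - s)) * (p ^ (s - r) - q ^ (s - r)) := by
        gcongr
        exact le_mul_of_one_le_right hC0 hone
    _ = C * (r / (r - s)) * p ^ (s - r) := by ring

end RpowWeight

section RiemannLebesgue

variable {E : Type*} [NormedAddCommGroup E] [NormedSpace ℂ E]

lemma tendsto_integral_exp_I_mul_smul_cocompact (f : ℝ → E) :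
    Tendsto (fun l : ℝ ↦ ∫ x, exp (I * (l * x : ℝ)) • f x) (cocompact ℝ) (𝓝 0) := by
  have hscale : Tendsto (fun l : ℝ ↦ l * -(2 * Real.pi)⁻¹) (cocompact ℝ) (cocompact ℝ) :=
    (Homeomorph.mulRight₀ (-(2 * Real.pi)⁻¹)
      (neg_ne_zero.2 (inv_ne_zero Real.two_pi_pos.ne'))).isClosedEmbedding.tendsto_cocompact
  refine ((Real.tendsto_integral_exp_smul_cocompact f).comp hscale).congr fun l ↦ ?_
  refine integral_congr_ae (.of_forall fun x ↦ ?_)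
  simp only [Circle.smul_def, Real.fourierChar_apply]
  congr 2
  push_cast
  have : (Real.pi : ℂ) ≠ 0 := ofReal_ne_zero.2 Real.pi_ne_zero
  field_simp

lemma tendsto_intervalIntegral_exp_I_mul_smul_cocompact (f : ℝ → E) (a b : ℝ) :
    Tendsto (fun l : ℝ ↦ ∫ x in a..b, exp (I * (l * x : ℝ)) • f x) (cocompact ℝ) (𝓝 0) := by
  have hset (u v : ℝ) :
      Tendsto (fun l : ℝ ↦ ∫ x in Ioc u v, exp (I * (l * x : ℝ)) • f x) (cocompact ℝ) (𝓝 0) := by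
    simpa only [← integral_indicator measurableSet_Ioc, indicator_smul] using
      tendsto_integral_exp_I_mul_smul_cocompact ((Ioc u v).indicator f)
  simpa only [intervalIntegral, sub_zero] using (hset a b).sub (hset b a)

lemma continuous_intervalIntegral_exp_I_mul_smul {f : ℝ → E} {a b : ℝ}
    (hf : IntervalIntegrable f volume a b) :
    Continuous fun l : ℝ ↦ ∫ x in a..b, exp (I * (l * x : ℝ)) • f x := by
  refine intervalIntegral.continuous_of_dominated_interval (bound := fun x ↦ ‖f x‖) (fun l ↦ ?_)
    (fun l ↦ .of_forall fun x _ ↦ ?_) hf.norm (.of_forall fun x _ ↦ by fun_prop)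
  · exact AEStronglyMeasurable.smul (by fun_prop) hf.def'.aestronglyMeasurable
  · rw [norm_smul, norm_exp_I_mul_ofReal, one_mul]

/-- The function `l ↦ ∫ x in a..b, e^{ilx} f x`, bundled with the Riemann–Lebesgue lemma as an
element of `C₀(ℝ, E)`. -/
noncomputable def intervalFourier {f : ℝ → E} {a b : ℝ} (hf : IntervalIntegrable f volume a b) :
    C₀(ℝ, E) where
  toFun l := ∫ x in a..b, exp (I * (l * x : ℝ)) • f x
  continuous_toFun := continuous_intervalIntegral_exp_I_mul_smul hf
  zero_at_infty' := tendsto_intervalIntegral_exp_I_mul_smul_cocompact f a b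

end RiemannLebesgue

section Dispersion

variable {α β p q : ℝ}

lemma hasDerivAt_mul_add_mul_rpow (α l : ℝ) {x : ℝ} (hx : 0 < x) :
    HasDerivAt (fun y ↦ l * y + y * y ^ α) (l + (1 + α) * x ^ α) x := by
  refine (((hasDerivAt_id' x).const_mul l).fun_add
    ((hasDerivAt_id' x).fun_mul (Real.hasDerivAt_rpow_const (.inl hx.ne')))).congr_deriv ?_
  rw [Real.rpow_sub_one hx.ne']
  field_simp

lemma hasDerivAt_add_mul_rpow (α l : ℝ) {x : ℝ} (hx : 0 < x) :
    HasDerivAt (fun y ↦ l + (1 + α) * y ^ α) ((1 + α) * (α * x ^ (α - 1))) x :=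
  ((Real.hasDerivAt_rpow_const (.inl hx.ne')).const_mul _).const_add _

lemma norm_integral_exp_mul_add_mul_rpow_le (hα : 0 < α) (hβα : β ≤ α) (hβ : β ≤ 1) (hp : 1 ≤ p)
    (hpq : p ≤ q) (l : ℝ) :
    ‖∫ x in p..q, exp (I * (l * x + x * x ^ α : ℝ))‖ ≤ 12 / √α * q ^ ((1 - β) / 2) := by
  have hq : 0 < q := by linarith
  have hconvex (x) (hx : x ∈ Icc p q) : α * q ^ (β - 1) ≤ (1 + α) * (α * x ^ (α - 1)) := by
    have hx1 : 1 ≤ x := hp.trans hx.1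
    calc α * q ^ (β - 1) ≤ α * x ^ (α - 1) := by
          gcongr
          calc q ^ (β - 1) ≤ x ^ (β - 1) :=
                Real.rpow_le_rpow_of_nonpos (by linarith) hx.2 (by linarith)
            _ ≤ x ^ (α - 1) := Real.rpow_le_rpow_of_exponent_le hx1 (by linarith)
      _ ≤ (1 + α) * (α * x ^ (α - 1)) := le_mul_of_one_le_left (by positivity) (by linarith)
  calc ‖∫ x in p..q, exp (I * (l * x + x * x ^ α : ℝ))‖ ≤ 12 / √(α * q ^ (β - 1)) :=
        norm_integral_exp_le_of_le_deriv_deriv hpq (by positivity)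
          (fun x hx ↦ hasDerivAt_mul_add_mul_rpow α l (by linarith [hx.1]))
          (fun x hx ↦ hasDerivAt_add_mul_rpow α l (by linarith [hx.1])) hconvex
    _ = 12 / √α * q ^ ((1 - β) / 2) := by
        rw [Real.sqrt_mul hα.le, Real.sqrt_eq_rpow (q ^ _), ← Real.rpow_mul hq.le,
          show (1 - β) / 2 = -((β - 1) * (1 / 2)) by ring, Real.rpow_neg hq.le]
        field_simp

lemma norm_integral_rpow_neg_smul_exp_mul_add_mul_rpow_le {r : ℝ} (hα : 0 < α) (hβα : β ≤ α)
    (hβ : β ≤ 1) (hβr : (1 - β) / 2 < r) (hp : 1 ≤ p) (hpq : p ≤ q) (l : ℝ) :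
    ‖∫ x in p..q, x ^ (-r) • exp (I * (l * x + x * x ^ α : ℝ))‖ ≤
      12 / √α * (r / (r - (1 - β) / 2)) * p ^ ((1 - β) / 2 - r) := by
  refine norm_integral_rpow_neg_smul_le (by linarith) hpq (by linarith) hβr ?_ fun x hx ↦
    norm_integral_exp_mul_add_mul_rpow_le hα hβα hβ hp hx.1 l
  exact continuousOn_exp_I_mul fun x hx ↦ hasDerivAt_mul_add_mul_rpow α l (by linarith [hx.1])

lemma exists_tendsto_norm_integral_rpow_neg_half_smul_exp_le (hα : 0 < α) :
    ∃ b : ℝ → ℝ, Tendsto b atTop (𝓝 0) ∧ ∀ p q l : ℝ, 1 ≤ p → p ≤ q →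
      ‖∫ x in p..q, x ^ (-(2⁻¹) : ℝ) • exp (I * (l * x + x * x ^ α : ℝ))‖ ≤ b p := by
  have hβ : 0 < min α 1 := lt_min hα one_pos
  refine ⟨fun p ↦ 12 / √α * (2⁻¹ / (2⁻¹ - (1 - min α 1) / 2)) * p ^ ((1 - min α 1) / 2 - 2⁻¹), ?_,
    fun p q l hp hpq ↦ norm_integral_rpow_neg_smul_exp_mul_add_mul_rpow_le hα (min_le_left _ _)
      (min_le_right _ _) (by linarith) hp hpq l⟩
  rw [show (1 - min α 1) / 2 - 2⁻¹ = -(min α 1 / 2) by ring]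
  simpa only [mul_zero] using (tendsto_rpow_neg_atTop (half_pos hβ)).const_mul _

end Dispersion

section HalfLine

lemma intervalIntegrable_rpow_smul_exp_I_mul {r : ℝ} (hr : -1 < r) {φ : ℝ → ℝ}
    (hφ : Measurable φ) (a b : ℝ) :
    IntervalIntegrable (fun x ↦ x ^ r • exp (I * φ x)) volume a b := by
  refine (intervalIntegral.intervalIntegrable_rpow' hr).mono_fun (by fun_prop)
    (.of_forall fun x ↦ ?_)
  simp only [norm_smul, norm_exp_I_mul_ofReal, mul_one, le_refl]

/-- The partial integrals `l ↦ ∫₀ᴿ x^{-1/2} e^{i(lx + x·x^α)} dx` over the half-line, as elements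
of the complete space `C₀(ℝ, ℂ)`. -/
noncomputable def halfLineIntegral (α R : ℝ) : C₀(ℝ, ℂ) :=
  intervalFourier (f := fun x ↦ x ^ (-(2⁻¹) : ℝ) • exp (I * (x * x ^ α : ℝ)))
    (intervalIntegrable_rpow_smul_exp_I_mul (by norm_num) (by fun_prop) 0 R)

lemma halfLineIntegral_apply (α R l : ℝ) :
    halfLineIntegral α R l =
      ∫ x in 0..R, x ^ (-(2⁻¹) : ℝ) • exp (I * (l * x + x * x ^ α : ℝ)) := by
  refine intervalIntegral.integral_congr fun x _ ↦ ?_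
  simp only [smul_comm (exp (I * (l * x : ℝ))), smul_eq_mul, ← exp_add]
  rw [ofReal_add, mul_add]

lemma halfLineIntegral_sub_apply (α p q l : ℝ) :
    halfLineIntegral α q l - halfLineIntegral α p l =
      ∫ x in p..q, x ^ (-(2⁻¹) : ℝ) • exp (I * (l * x + x * x ^ α : ℝ)) := by
  have hint := intervalIntegrable_rpow_smul_exp_I_mul (r := -(2⁻¹)) (by norm_num)
    (φ := fun x ↦ l * x + x * x ^ α) (by fun_prop)
  rw [halfLineIntegral_apply, halfLineIntegral_apply,
    intervalIntegral.integral_interval_sub_left (hint 0 q) (hint 0 p)]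

theorem exists_tendsto_halfLineIntegral {α : ℝ} (hα : 0 < α) :
    ∃ H : C₀(ℝ, ℂ), Tendsto (halfLineIntegral α) atTop (𝓝 H) := by
  obtain ⟨b, hb, hle⟩ := exists_tendsto_norm_integral_rpow_neg_half_smul_exp_le hα
  refine cauchySeq_tendsto_of_complete (Metric.cauchySeq_iff'.2 fun ε hε ↦ ?_)
  obtain ⟨P, hP, hPε⟩ := ((eventually_ge_atTop 1).and (hb.eventually_lt_const hε)).exists
  refine ⟨P, fun R hR ↦ lt_of_le_of_lt ?_ hPε⟩
  have hbP : 0 ≤ b P := (norm_nonneg _).trans (hle P P 0 hP le_rfl)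
  rw [← ZeroAtInftyContinuousMap.dist_toBCF_eq_dist, BoundedContinuousFunction.dist_le hbP]
  intro l
  calc dist (halfLineIntegral α R l) (halfLineIntegral α P l)
      = ‖∫ x in P..R, x ^ (-(2⁻¹) : ℝ) • exp (I * (l * x + x * x ^ α : ℝ))‖ := by
        rw [dist_eq_norm, halfLineIntegral_sub_apply]
    _ ≤ b P := hle P R l hP hR

end HalfLine

section Reflection

lemma intervalIntegral_neg_self_eq_sub_conj {k : ℝ → ℂ} {R : ℝ}
    (hk : IntervalIntegrable k volume 0 R) (hneg : ∀ x, k (-x) = -conj (k x)) :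
    ∫ x in (-R)..R, k x = (∫ x in 0..R, k x) - conj (∫ x in 0..R, k x) := by
  have hconj : IntervalIntegrable (fun x ↦ k (-x)) volume 0 R := by
    simp only [hneg]
    rw [intervalIntegrable_iff] at hk ⊢
    exact ((conjCLE : ℂ →L[ℝ] ℂ).integrable_comp hk).neg
  have hleft : IntervalIntegrable k volume (-R) 0 := by
    simpa only [neg_neg, neg_zero] using
      (IntervalIntegrable.iff_comp_neg (f := k) (a := 0) (b := -R)).2 (by simpa using hconj) |>.symm
  have hreflect : ∫ x in (-R)..0, k x = -conj (∫ x in 0..R, k x) := by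
    rw [← intervalIntegral.intervalIntegral_conj, ← intervalIntegral.integral_neg, ← neg_zero,
      ← intervalIntegral.integral_comp_neg, neg_zero]
    simp only [hneg]
  rw [← intervalIntegral.integral_add_adjacent_intervals hleft hk, hreflect]
  ring

/-- The integrand of `Fpartial`. -/
noncomputable def lineIntegrand (α l ξ : ℝ) : ℂ :=
  (Real.sign ξ : ℂ) * exp (-I * (Real.sign ξ : ℂ) * ((Real.pi / 4 : ℝ) : ℂ)) *
    ((|ξ| ^ (-(2⁻¹) : ℝ) : ℝ) : ℂ) * exp (I * ((l * ξ + ξ * |ξ| ^ α : ℝ) : ℂ))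

lemma lineIntegrand_neg (α l ξ : ℝ) : lineIntegrand α l (-ξ) = -conj (lineIntegrand α l ξ) := by
  simp only [lineIntegrand, Real.sign_neg, abs_neg, map_mul, ← exp_conj, conj_ofReal, conj_I,
    map_neg]
  push_cast
  ring_nf

lemma lineIntegrand_of_pos (α l : ℝ) {ξ : ℝ} (hξ : 0 < ξ) :
    lineIntegrand α l ξ =
      exp (-I * (Real.pi / 4 : ℝ)) * ξ ^ (-(2⁻¹) : ℝ) • exp (I * (l * ξ + ξ * ξ ^ α : ℝ)) := by
  simp only [lineIntegrand, Real.sign_of_pos hξ, abs_of_pos hξ, real_smul, ofReal_one, one_mul,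
    mul_one, mul_assoc]

theorem Fpartial_eq_halfLineIntegral_sub_conj (α l : ℝ) {R : ℝ} (hR : 0 ≤ R) :
    Fpartial α l R = exp (-I * (Real.pi / 4 : ℝ)) * halfLineIntegral α R l -
      conj (exp (-I * (Real.pi / 4 : ℝ)) * halfLineIntegral α R l) := by
  have hpos : EqOn (fun ξ ↦ exp (-I * (Real.pi / 4 : ℝ)) *
      ξ ^ (-(2⁻¹) : ℝ) • exp (I * (l * ξ + ξ * ξ ^ α : ℝ))) (lineIntegrand α l) (uIoc 0 R) := by
    intro ξ hξ
    rw [uIoc_of_le hR] at hξ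
    exact (lineIntegrand_of_pos α l hξ.1).symm
  have hint : IntervalIntegrable (lineIntegrand α l) volume 0 R :=
    ((intervalIntegrable_rpow_smul_exp_I_mul (by norm_num) (by fun_prop) 0 R).const_mul _).congr
      hpos
  rw [halfLineIntegral_apply, ← intervalIntegral.integral_const_mul,
    intervalIntegral.integral_congr_ae (.of_forall hpos)]
  exact intervalIntegral_neg_self_eq_sub_conj hint (lineIntegrand_neg α l)

end Reflection

/-- For `α > 0`, the improper Riemann integral
`F(λ) = lim_{R→∞} ∫_{-R}^{R} sgn ξ · e^{-i·sgn ξ·π/4} |ξ|^{-1/2} e^{i(λξ + ξ|ξ|^α)} dξ`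
exists for every `λ`; the function `F` is continuous and tends to `0` as `|λ| → ∞`. -/
theorem F_exists_continuous_decay (α : ℝ) (hα : 0 < α) :
    ∃ F : ℝ → ℂ,
      (∀ l : ℝ, Tendsto (fun R : ℝ => Fpartial α l R) atTop (nhds (F l))) ∧
      Continuous F ∧
      Tendsto F (cocompact ℝ) (nhds 0) := by
  obtain ⟨H, hH⟩ := exists_tendsto_halfLineIntegral hα
  have hH_apply (l : ℝ) : Tendsto (fun R ↦ halfLineIntegral α R l) atTop (𝓝 (H l)) :=
    (ZeroAtInftyContinuousMap.tendsto_iff_tendstoUniformly.1 hH).tendsto_at l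
  let T (z : ℂ) : ℂ := exp (-I * (Real.pi / 4 : ℝ)) * z -
    conj (exp (-I * (Real.pi / 4 : ℝ)) * z)
  have hT : Continuous T := by fun_prop
  have hT_zero : T 0 = 0 := by simp only [T, mul_zero, map_zero, sub_zero]
  refine ⟨T ∘ H, fun l ↦ ?_, hT.comp (map_continuous H), ?_⟩
  · refine ((hT.tendsto (H l)).comp (hH_apply l)).congr' ?_
    filter_upwards [eventually_ge_atTop 0] with R hR
    exact (Fpartial_eq_halfLineIntegral_sub_conj α l hR).symm
  · exact hT_zero ▸ (hT.tendsto 0).comp (zero_at_infty H)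
end

section
/- Let α > 0, T > 0, and define A(t,x,y) = t^{−(α+2)/(2(α+1))} F(λ(t,x,y)) with λ(t,x,y) = x·t^{−1/(α+1)} + y²/(4 t^{(α+2)/(α+1)}). Let f : [0,T] → L¹(ℝ²) be continuous and suppose there is a continuous g : [0,T] → L¹(ℝ²) such that for each s ∈ [0,T], g(s) is the distributional derivative with respect to x of f(s). Then for each t ∈ (0,T] the function W(t,x,y) := ∫_{0}^{t} ∫_{ℝ²} A(t−s, x−x′, y−y′) f(s,x′,y′) dx′dy′ ds is well defined (the inner integral is bounded by a constant times (t−s)^{−(α+2)/(2(α+1))}‖f(s)‖_{L¹}, which is integrable in s since (α+2)/(2(α+1)) < 1), is continuously differentiable in x with ∂_x W(t,x,y) = ∫_{0}^{t} ∫_{ℝ²} A(t−s, x−x′, y−y′) g(s,x′,y′) dx′dy′ ds, and for every fixed y ∈ ℝ and t ∈ (0,T], W(t,x,y) → 0 as |x| → ∞. -/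
open MeasureTheory Filter

/-- The self-similar variable `λ(t,x,y) = x·t^{-1/(α+1)} + y²/(4t^{(α+2)/(α+1)})`. -/
noncomputable def selfSim (α t x y : ℝ) : ℝ :=
  x * t ^ (-(1 / (α + 1)) : ℝ) + y ^ 2 / (4 * t ^ ((α + 2) / (α + 1) : ℝ))

/-- The kernel `A(t,x,y) = t^{-(α+2)/(2(α+1))} F(λ(t,x,y))`. -/
noncomputable def Akernel (F : ℝ → ℂ) (α t x y : ℝ) : ℂ :=
  ((t ^ (-((α + 2) / (2 * (α + 1))) : ℝ) : ℝ) : ℂ) * F (selfSim α t x y)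

/-!
After the substitution `ξ = η²` the amplitude `|ξ|^(-1/2)` disappears from the integral defining
`F`. A van der Corput estimate, in a form regularised so that it needs no lower bound on the
derivative of the phase, makes the tails of the resulting integral small uniformly in `λ`. Hence `F`
is a uniform limit of Fourier transforms of integrable functions and belongs to `C₀(ℝ)`.

Convolution with a bounded continuous kernel turns a weak derivative into a classical one: this is
the definition of the weak derivative when the kernel is a test function, and the general case
follows by approximating the kernel boundedly and pointwise by test functions. Since `‖A(t - s)‖_∞`
is integrable in `s`, dominated convergence then carries differentiability, continuity and decay
through the time integral.
-/

section OscillatoryIntegral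

lemma norm_integral_le_of_hasDerivAt_sub {E : Type*} [NormedAddCommGroup E] [NormedSpace ℝ E]
    [CompleteSpace E] {e r H : ℝ → E} {w : ℝ → ℝ} {a b : ℝ} (hab : a ≤ b)
    (he : ContinuousOn e (Set.Icc a b)) (hr : ContinuousOn r (Set.Icc a b))
    (hw : ContinuousOn w (Set.Icc a b)) (hH : ∀ x ∈ Set.Icc a b, HasDerivAt H (e x - r x) x)
    (hrw : ∀ x ∈ Set.Icc a b, ‖r x‖ ≤ w x) :
    ‖∫ x in a..b, e x‖ ≤ ‖H b‖ + ‖H a‖ + ∫ x in a..b, w x := by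
  have int_e := he.intervalIntegrable_of_Icc hab (μ := volume)
  have int_r := hr.intervalIntegrable_of_Icc hab (μ := volume)
  have boundary : (∫ x in a..b, e x) - ∫ x in a..b, r x = H b - H a := by
    rw [← intervalIntegral.integral_sub int_e int_r]
    exact intervalIntegral.integral_eq_sub_of_hasDerivAt
      (fun x hx => hH x (Set.uIcc_of_le hab ▸ hx)) (int_e.sub int_r)
  have remainder : ‖∫ x in a..b, r x‖ ≤ ∫ x in a..b, w x :=
    intervalIntegral.norm_integral_le_of_norm_le hab
      (ae_of_all _ fun x hx => hrw x (Set.Ioc_subset_Icc_self hx))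
      (hw.intervalIntegrable_of_Icc hab)
  rw [eq_add_of_sub_eq boundary]
  exact (norm_add_le _ _).trans (add_le_add (norm_sub_le _ _) remainder)

variable {φ φ' φ'' : ℝ → ℝ} {a b ρ : ℝ}

lemma abs_div_sq_add_le (hρ : 0 < ρ) (y : ℝ) : |y / (y ^ 2 + ρ)| ≤ 1 / (2 * √ρ) := by
  have h_amgm : 2 * (|y| * √ρ) ≤ y ^ 2 + ρ := by
    nlinarith [sq_nonneg (|y| - √ρ), Real.sq_sqrt hρ.le, sq_abs y]
  rw [abs_div, abs_of_pos (by positivity : 0 < y ^ 2 + ρ),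
    div_le_div_iff₀ (by positivity) (by positivity)]
  linarith

lemma hasDerivAt_div_sq_add {x d : ℝ} (hρ : 0 < ρ) (h : HasDerivAt φ d x) :
    HasDerivAt (fun x => φ x / (φ x ^ 2 + ρ))
      (d * (ρ - φ x ^ 2) / (φ x ^ 2 + ρ) ^ 2) x := by
  have hne : φ x ^ 2 + ρ ≠ 0 := by positivity
  refine (h.div ((h.fun_pow 2).add_const ρ) hne).congr_deriv ?_
  push_cast
  ring

lemma abs_mul_sub_sq_div_le (hρ : 0 < ρ) (d y : ℝ) :
    |d * (ρ - y ^ 2) / (y ^ 2 + ρ) ^ 2| ≤ |d| / (y ^ 2 + ρ) := by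
  have hpos : 0 < y ^ 2 + ρ := by positivity
  have hnum : |ρ - y ^ 2| ≤ y ^ 2 + ρ := abs_le.2 ⟨by linarith, by linarith [sq_nonneg y]⟩
  rw [abs_div, abs_mul, abs_of_pos (pow_pos hpos 2), div_le_div_iff₀ (by positivity) hpos]
  nlinarith [mul_le_mul_of_nonneg_left hnum (mul_nonneg (abs_nonneg d) hpos.le)]

lemma norm_cexp_I_mul_ofReal (x : ℝ) : ‖Complex.exp (Complex.I * (x : ℂ))‖ = 1 := by
  rw [mul_comm, Complex.norm_exp_ofReal_mul_I]

lemma hasDerivAt_div_sq_add_mul_cexp {x d : ℝ} (hρ : 0 < ρ) (hφ : HasDerivAt φ (φ' x) x)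
    (hφ' : HasDerivAt φ' d x) :
    HasDerivAt
      (fun x => -Complex.I * ((φ' x / (φ' x ^ 2 + ρ) : ℝ) : ℂ) *
        Complex.exp (Complex.I * (φ x : ℂ)))
      (Complex.exp (Complex.I * (φ x : ℂ)) -
        (Complex.I * ((d * (ρ - φ' x ^ 2) / (φ' x ^ 2 + ρ) ^ 2 : ℝ) : ℂ) +
          ((ρ / (φ' x ^ 2 + ρ) : ℝ) : ℂ)) * Complex.exp (Complex.I * (φ x : ℂ))) x := by
  have hu := (hasDerivAt_div_sq_add hρ hφ').ofReal_comp
  have he := (hφ.ofReal_comp.const_mul Complex.I).cexp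
  have hne : (φ' x : ℂ) ^ 2 + ρ ≠ 0 := by exact_mod_cast (by positivity : φ' x ^ 2 + ρ ≠ 0)
  refine ((hu.const_mul (-Complex.I)).mul he).congr_deriv ?_
  push_cast
  field_simp
  linear_combination (-(φ' x : ℂ) ^ 2 * ((φ' x : ℂ) ^ 2 + ρ)) * Complex.I_sq

lemma norm_div_sq_add_mul_cexp_le (hρ : 0 < ρ) (y θ : ℝ) :
    ‖-Complex.I * ((y / (y ^ 2 + ρ) : ℝ) : ℂ) * Complex.exp (Complex.I * (θ : ℂ))‖ ≤
      1 / (2 * √ρ) := by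
  rw [norm_mul, norm_mul, norm_neg, Complex.norm_I, one_mul, norm_cexp_I_mul_ofReal, mul_one,
    Complex.norm_real, Real.norm_eq_abs]
  exact abs_div_sq_add_le hρ y

/- Integration by parts against `φ' / (φ' ^ 2 + ρ)`, a regularisation of `1 / φ'` which makes it
unnecessary to cut out the stationary points of `φ`. -/
lemma norm_integral_cexp_le (hab : a ≤ b) (hρ : 0 < ρ)
    (hφ : ∀ x ∈ Set.Icc a b, HasDerivAt φ (φ' x) x)
    (hφ' : ∀ x ∈ Set.Icc a b, HasDerivAt φ' (φ'' x) x) (hφ'' : ContinuousOn φ'' (Set.Icc a b)) :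
    ‖∫ x in a..b, Complex.exp (Complex.I * (φ x : ℂ))‖ ≤
      1 / √ρ + ∫ x in a..b, (|φ'' x| + ρ) / (φ' x ^ 2 + ρ) := by
  have hpos : ∀ x, 0 < φ' x ^ 2 + ρ := fun x => by positivity
  have cont_φ : ContinuousOn φ (Set.Icc a b) := HasDerivAt.continuousOn hφ
  have cont_φ' : ContinuousOn φ' (Set.Icc a b) := HasDerivAt.continuousOn hφ'
  have cont_denom : ContinuousOn (fun x => φ' x ^ 2 + ρ) (Set.Icc a b) := by fun_prop
  let u' : ℝ → ℝ := fun x => φ'' x * (ρ - φ' x ^ 2) / (φ' x ^ 2 + ρ) ^ 2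
  let v : ℝ → ℂ := fun x => Complex.I * (u' x : ℂ) + ((ρ / (φ' x ^ 2 + ρ) : ℝ) : ℂ)
  have cont_u' : ContinuousOn u' (Set.Icc a b) :=
    (by fun_prop : ContinuousOn (fun x => φ'' x * (ρ - φ' x ^ 2)) (Set.Icc a b)).div
      (cont_denom.pow 2) fun x _ => (pow_pos (hpos x) 2).ne'
  have cont_w : ContinuousOn (fun x => ρ / (φ' x ^ 2 + ρ)) (Set.Icc a b) :=
    continuousOn_const.div cont_denom fun x _ => (hpos x).ne'
  have cont_v : ContinuousOn v (Set.Icc a b) := by fun_prop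
  have cont_bound : ContinuousOn (fun x => (|φ'' x| + ρ) / (φ' x ^ 2 + ρ)) (Set.Icc a b) :=
    (by fun_prop : ContinuousOn (fun x => |φ'' x| + ρ) (Set.Icc a b)).div cont_denom
      fun x _ => (hpos x).ne'
  have norm_remainder : ∀ x ∈ Set.Icc a b, ‖v x * Complex.exp (Complex.I * (φ x : ℂ))‖ ≤
      (|φ'' x| + ρ) / (φ' x ^ 2 + ρ) := fun x _ => by
    rw [norm_mul, norm_cexp_I_mul_ofReal, mul_one, add_div]
    refine (norm_add_le _ _).trans (add_le_add ?_ ?_)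
    · rw [norm_mul, Complex.norm_I, one_mul, Complex.norm_real]
      exact abs_mul_sub_sq_div_le hρ _ _
    · rw [Complex.norm_real, Real.norm_of_nonneg (div_pos hρ (hpos x)).le]
  refine (norm_integral_le_of_hasDerivAt_sub hab (by fun_prop) (cont_v.mul (by fun_prop)) cont_bound
    (fun x hx => hasDerivAt_div_sq_add_mul_cexp hρ (hφ x hx) (hφ' x hx)) norm_remainder).trans ?_
  have boundary := fun x => norm_div_sq_add_mul_cexp_le hρ (φ' x) (φ x)
  have halves : 1 / √ρ = 1 / (2 * √ρ) + 1 / (2 * √ρ) := by ring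
  linarith [boundary a, boundary b]

lemma integral_deriv_div_sq_add_le (hab : a ≤ b) (hρ : 0 < ρ)
    (hφ : ∀ x ∈ Set.Icc a b, HasDerivAt φ (φ' x) x) (hφ' : ContinuousOn φ' (Set.Icc a b)) :
    ∫ x in a..b, φ' x / (φ x ^ 2 + ρ) ≤ Real.pi / √ρ := by
  have hderiv : ∀ x ∈ Set.uIcc a b,
      HasDerivAt (fun x => Real.arctan (φ x / √ρ) / √ρ) (φ' x / (φ x ^ 2 + ρ)) x := by
    intro x hx
    rw [Set.uIcc_of_le hab] at hx
    refine (((hφ x hx).div_const √ρ).arctan.div_const √ρ).congr_deriv ?_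
    rw [div_pow, Real.sq_sqrt hρ.le]
    have : φ x ^ 2 + ρ ≠ 0 := by positivity
    have : ρ + φ x ^ 2 ≠ 0 := by positivity
    field_simp
    rw [Real.sq_sqrt hρ.le]
    ring
  have hcont : ContinuousOn (fun x => φ' x / (φ x ^ 2 + ρ)) (Set.uIcc a b) := by
    rw [Set.uIcc_of_le hab]
    exact hφ'.div (((HasDerivAt.continuousOn hφ).pow 2).add continuousOn_const)
      fun x _ => by positivity
  rw [intervalIntegral.integral_eq_sub_of_hasDerivAt hderiv hcont.intervalIntegrable, ← sub_div]
  gcongr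
  linarith [Real.arctan_lt_pi_div_two (φ b / √ρ), Real.neg_pi_div_two_lt_arctan (φ a / √ρ)]

lemma norm_integral_cexp_le_of_abs_le {h : ℝ → ℝ} (hab : a ≤ b) (hρ : 0 < ρ)
    (hφ : ∀ x ∈ Set.Icc a b, HasDerivAt φ (φ' x) x)
    (hφ' : ∀ x ∈ Set.Icc a b, HasDerivAt φ' (φ'' x) x) (hφ'' : ContinuousOn φ'' (Set.Icc a b))
    (h_int : IntervalIntegrable h volume a b)
    (hle : ∀ x ∈ Set.Icc a b, |φ'' x| + ρ ≤ 2 * φ'' x + h x * (φ' x ^ 2 + ρ)) :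
    ‖∫ x in a..b, Complex.exp (Complex.I * (φ x : ℂ))‖ ≤
      (1 + 2 * Real.pi) / √ρ + ∫ x in a..b, h x := by
  have hpos : ∀ x, 0 < φ' x ^ 2 + ρ := fun x => by positivity
  have cont_φ' : ContinuousOn φ' (Set.Icc a b) := HasDerivAt.continuousOn hφ'
  have integrable_div : ∀ {ψ : ℝ → ℝ}, ContinuousOn ψ (Set.Icc a b) →
      IntervalIntegrable (fun x => ψ x / (φ' x ^ 2 + ρ)) volume a b := fun hψ =>
    ContinuousOn.intervalIntegrable_of_Icc hab
      (hψ.div ((cont_φ'.pow 2).add continuousOn_const) fun x _ => (hpos x).ne')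
  have h_abs := integrable_div (hφ''.abs.add (continuousOn_const (c := ρ)))
  have h_main := (integrable_div hφ'').const_mul 2
  have hmono : ∫ x in a..b, (|φ'' x| + ρ) / (φ' x ^ 2 + ρ) ≤
      ∫ x in a..b, (2 * (φ'' x / (φ' x ^ 2 + ρ)) + h x) := by
    refine intervalIntegral.integral_mono_on hab h_abs (h_main.add h_int) fun x hx => ?_
    rw [div_le_iff₀ (hpos x), add_mul, mul_assoc, div_mul_cancel₀ _ (hpos x).ne']
    exact hle x hx
  rw [intervalIntegral.integral_add h_main h_int, intervalIntegral.integral_const_mul] at hmono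
  have harctan := integral_deriv_div_sq_add_le hab hρ hφ' hφ''
  have hL1 := norm_integral_cexp_le hab hρ hφ hφ' hφ''
  rw [add_div, mul_div_assoc]
  linarith

end OscillatoryIntegral

section RootPhase

variable {α l r r' η : ℝ}

/-- The phase `l * ξ + ξ ^ (α + 1)` of the integral defining `F`, in the variable `η = √ξ`. -/
noncomputable def rootPhase (α l η : ℝ) : ℝ := l * η ^ 2 + η ^ (2 * α + 2)

/-- A bound, uniform in `l`, for the integral of `exp (i * rootPhase α l)` over intervals to the
right of `r`. -/
noncomputable def rootPhaseTail (α r : ℝ) : ℝ :=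
  (1 + 2 * Real.pi) / √(2 * α * (α + 1) * r ^ (2 * α)) +
    r ^ (-(2 * α + 1)) / (2 * α * (α + 1) * (2 * α + 1))

lemma hasDerivAt_rootPhase (hη : 0 < η) :
    HasDerivAt (rootPhase α l) (2 * l * η + (2 * α + 2) * η ^ (2 * α + 1)) η := by
  refine (((hasDerivAt_pow 2 η).const_mul l).add
    (Real.hasDerivAt_rpow_const (p := 2 * α + 2) (Or.inl hη.ne'))).congr_deriv ?_
  rw [show 2 * α + 2 - 1 = 2 * α + 1 by ring]
  push_cast
  ring

lemma hasDerivAt_deriv_rootPhase (hη : 0 < η) :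
    HasDerivAt (fun η => 2 * l * η + (2 * α + 2) * η ^ (2 * α + 1))
      (2 * l + (2 * α + 2) * (2 * α + 1) * η ^ (2 * α)) η := by
  refine (((hasDerivAt_id η).const_mul (2 * l)).add
    ((Real.hasDerivAt_rpow_const (p := 2 * α + 1) (Or.inl hη.ne')).const_mul
      (2 * α + 2))).congr_deriv ?_
  rw [show 2 * α + 1 - 1 = 2 * α by ring]
  ring

lemma abs_add_two_mul_add_le {k : ℝ} (hk : 0 < k) (q : ℝ) :
    |q + 2 * k| + k ≤ 2 * (q + 2 * k) + q ^ 2 / k := by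
  rw [← sub_le_iff_le_add', le_div_iff₀ hk]
  rcases abs_cases (q + 2 * k) with ⟨h, -⟩ | ⟨h, -⟩ <;> rw [h] <;>
    nlinarith [sq_nonneg (2 * q + k), sq_nonneg (2 * q + 3 * k)]

/- Writing the first derivative as `η * q` and `k = 2 * α * (α + 1) * η ^ (2 * α)`, the second
derivative is `q + 2 * k`. -/
lemma abs_deriv_deriv_rootPhase_add_le (hα : 0 < α) (hr : 0 < r) (hrη : r ≤ η) :
    |2 * l + (2 * α + 2) * (2 * α + 1) * η ^ (2 * α)| + 2 * α * (α + 1) * r ^ (2 * α) ≤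
      2 * (2 * l + (2 * α + 2) * (2 * α + 1) * η ^ (2 * α)) +
        η ^ (-(2 * α + 2)) / (2 * α * (α + 1)) *
          ((2 * l * η + (2 * α + 2) * η ^ (2 * α + 1)) ^ 2 + 2 * α * (α + 1) * r ^ (2 * α)) := by
  have hη : 0 < η := hr.trans_le hrη
  set k := 2 * α * (α + 1) * η ^ (2 * α) with hk
  set q := 2 * l + (2 * α + 2) * η ^ (2 * α) with hq
  have hρk : 2 * α * (α + 1) * r ^ (2 * α) ≤ k := by
    rw [hk]
    gcongr
  have hsecond : 2 * l + (2 * α + 2) * (2 * α + 1) * η ^ (2 * α) = q + 2 * k := by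
    rw [hk, hq]; ring
  have hfirst : 2 * l * η + (2 * α + 2) * η ^ (2 * α + 1) = η * q := by
    rw [hq, Real.rpow_add_one hη.ne']; ring
  have hquot : η ^ (-(2 * α + 2)) / (2 * α * (α + 1)) * (η * q) ^ 2 = q ^ 2 / k := by
    rw [hk, Real.rpow_neg hη.le, Real.rpow_add hη, Real.rpow_two]
    field_simp
  rw [hsecond, hfirst, mul_add (η ^ (-(2 * α + 2)) / (2 * α * (α + 1))), hquot]
  have hrest : 0 ≤ η ^ (-(2 * α + 2)) / (2 * α * (α + 1)) *
      (2 * α * (α + 1) * r ^ (2 * α)) := by positivity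
  linarith [abs_add_two_mul_add_le (show 0 < k by positivity) q]

lemma integral_rpow_neg_le {p : ℝ} (hp : 0 < p) (hr : 0 < r) (hrr' : r ≤ r') :
    ∫ η in r..r', η ^ (-(p + 1)) ≤ r ^ (-p) / p := by
  have hr' := hr.trans_le hrr'
  rw [integral_rpow (Or.inr ⟨by linarith, fun h => (Set.uIcc_of_le hrr' ▸ h).1.not_gt hr⟩),
    show -(p + 1) + 1 = -p by ring, div_neg, ← neg_div, neg_sub]
  gcongr
  linarith [Real.rpow_nonneg hr'.le (-p)]

lemma norm_integral_cexp_rootPhase_le (hα : 0 < α) (l : ℝ) (hr : 0 < r) (hrr' : r ≤ r') :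
    ‖∫ η in r..r', Complex.exp (Complex.I * (rootPhase α l η : ℂ))‖ ≤ rootPhaseTail α r := by
  have hpos : ∀ η ∈ Set.Icc r r', 0 < η := fun η hη => hr.trans_le hη.1
  have cont_rpow : ∀ p : ℝ, ContinuousOn (fun η : ℝ => η ^ p) (Set.Icc r r') := fun p =>
    continuousOn_id.rpow_const fun η hη => Or.inl (hpos η hη).ne'
  refine (norm_integral_cexp_le_of_abs_le hrr'
    (show 0 < 2 * α * (α + 1) * r ^ (2 * α) by positivity)
    (fun η hη => hasDerivAt_rootPhase (hpos η hη))
    (fun η hη => hasDerivAt_deriv_rootPhase (hpos η hη))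
    (continuousOn_const.add (continuousOn_const.mul (cont_rpow _)))
    (((cont_rpow _).div_const _).intervalIntegrable_of_Icc hrr')
    fun η hη => abs_deriv_deriv_rootPhase_add_le hα hr hη.1).trans ?_
  have htail := integral_rpow_neg_le (p := 2 * α + 1) (by positivity) hr hrr'
  rw [show 2 * α + 1 + 1 = 2 * α + 2 by ring] at htail
  rw [intervalIntegral.integral_div, rootPhaseTail, mul_comm (2 * α * (α + 1)) (2 * α + 1),
    ← div_div (r ^ _)]
  gcongr

lemma tendsto_rootPhaseTail (hα : 0 < α) : Tendsto (rootPhaseTail α) atTop (nhds 0) := by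
  have hsqrt : Tendsto (fun r : ℝ => √(2 * α * (α + 1) * r ^ (2 * α))) atTop atTop :=
    Real.tendsto_sqrt_atTop.comp
      ((tendsto_rpow_atTop (by positivity)).const_mul_atTop (by positivity))
  have hrpow := tendsto_rpow_neg_atTop (y := 2 * α + 1) (by positivity)
  have hsum := (hsqrt.const_div_atTop (1 + 2 * Real.pi)).add
    (hrpow.div_const (2 * α * (α + 1) * (2 * α + 1)))
  rw [zero_div, add_zero] at hsum
  exact hsum

end RootPhase

section ZeroAtInfty

open scoped ZeroAtInfty FourierTransform

lemma exists_zeroAtInfty_eq_integral_cexp_mul {g : ℝ → ℂ} (hg : Integrable g) :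
    ∃ G : C₀(ℝ, ℂ), ∀ l : ℝ, G l = ∫ ξ, Complex.exp (Complex.I * ((l * ξ : ℝ) : ℂ)) * g ξ := by
  have hscale : Tendsto (fun l : ℝ => l * -(2 * Real.pi)⁻¹) (cocompact ℝ) (cocompact ℝ) :=
    (Homeomorph.mulRight₀ (-(2 * Real.pi)⁻¹) (by simp [Real.pi_ne_zero])).isClosedEmbedding
      |>.tendsto_cocompact
  have hcont : Continuous (𝓕 g) := VectorFourier.fourierIntegral_continuous
    Real.continuous_fourierChar continuous_inner hg
  refine ⟨⟨⟨fun l => 𝓕 g (l * -(2 * Real.pi)⁻¹), hcont.comp (continuous_mul_const _)⟩,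
    (Real.zero_at_infty_fourier g).comp hscale⟩, fun l => ?_⟩
  refine (Real.fourier_real_eq_integral_exp_smul g _).trans (integral_congr_ae (ae_of_all _ ?_))
  intro ξ
  dsimp only
  rw [smul_eq_mul, mul_comm _ Complex.I]
  congr 4
  field_simp

lemma exists_zeroAtInfty_of_tendstoUniformly {ι X E : Type*} [TopologicalSpace X]
    [NormedAddCommGroup E] {p : Filter ι} [p.NeBot] {G : ι → C₀(X, E)} {F : X → E}
    (h : TendstoUniformly (fun i => G i) F p) : ∃ G₀ : C₀(X, E), ⇑G₀ = F :=
  ⟨⟨⟨F, h.continuous (Frequently.of_forall fun i => (G i).continuous)⟩,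
    h.tendsto_of_eventually_tendsto
      (Eventually.of_forall fun i => (G i).zero_at_infty') tendsto_const_nhds⟩, rfl⟩

end ZeroAtInfty

section DispersiveIntegral

open scoped ZeroAtInfty ComplexConjugate

variable {α l R R' : ℝ}

/-- The integrand of `Fpartial`. -/
noncomputable def dispersiveIntegrand (α l ξ : ℝ) : ℂ :=
  (Real.sign ξ : ℂ) *
    Complex.exp (-Complex.I * (Real.sign ξ : ℂ) * ((Real.pi / 4 : ℝ) : ℂ)) *
    ((|ξ| ^ (-(2⁻¹) : ℝ) : ℝ) : ℂ) *
    Complex.exp (Complex.I * ((l * ξ + ξ * |ξ| ^ α : ℝ) : ℂ))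

lemma dispersiveIntegrand_eq_cexp_mul (α l ξ : ℝ) :
    dispersiveIntegrand α l ξ =
      Complex.exp (Complex.I * ((l * ξ : ℝ) : ℂ)) * dispersiveIntegrand α 0 ξ := by
  simp only [dispersiveIntegrand, zero_mul, zero_add]
  rw [Complex.ofReal_add, mul_add, Complex.exp_add]
  ring

lemma dispersiveIntegrand_neg (α l ξ : ℝ) :
    dispersiveIntegrand α l (-ξ) = -conj (dispersiveIntegrand α l ξ) := by
  simp only [dispersiveIntegrand, map_mul, ← Complex.exp_conj, map_neg, Complex.conj_I,
    Complex.conj_ofReal, Real.sign_neg, abs_neg]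
  push_cast
  ring_nf

lemma norm_dispersiveIntegrand_le (α l ξ : ℝ) :
    ‖dispersiveIntegrand α l ξ‖ ≤ |ξ| ^ (-(2⁻¹) : ℝ) := by
  have hsign : ‖(Real.sign ξ : ℂ)‖ ≤ 1 := by
    rcases Real.sign_apply_eq ξ with h | h | h <;> simp [h]
  have hphase : ‖Complex.exp (-Complex.I * (Real.sign ξ : ℂ) * ((Real.pi / 4 : ℝ) : ℂ))‖ = 1 := by
    rw [neg_mul, neg_mul, Complex.exp_neg, norm_inv, mul_assoc, ← Complex.ofReal_mul,
      norm_cexp_I_mul_ofReal, inv_one]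
  rw [dispersiveIntegrand, norm_mul, norm_mul, norm_mul, norm_cexp_I_mul_ofReal, hphase, mul_one,
    mul_one, Complex.norm_real (|ξ| ^ _), Real.norm_of_nonneg (Real.rpow_nonneg (abs_nonneg ξ) _)]
  exact mul_le_of_le_one_left (Real.rpow_nonneg (abs_nonneg ξ) _) hsign

lemma measurable_dispersiveIntegrand (α l : ℝ) : Measurable (dispersiveIntegrand α l) := by
  have hsign : Measurable Real.sign := measurable_const.ite measurableSet_Iio
    (measurable_const.ite measurableSet_Ioi measurable_const)
  unfold dispersiveIntegrand
  fun_prop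

lemma intervalIntegrable_abs_rpow {p : ℝ} (hp : -1 < p) (a b : ℝ) :
    IntervalIntegrable (fun ξ : ℝ => |ξ| ^ p) volume a b := by
  refine intervalIntegrable_of_even (fun ξ => by rw [abs_neg]) fun b hb => ?_
  refine (intervalIntegral.intervalIntegrable_rpow' hp).congr fun ξ hξ => ?_
  rw [Set.uIoc_of_le hb.le] at hξ
  simp only [abs_of_pos hξ.1]

lemma intervalIntegrable_dispersiveIntegrand (α l a b : ℝ) :
    IntervalIntegrable (dispersiveIntegrand α l) volume a b :=
  (intervalIntegrable_abs_rpow (by norm_num) a b).mono_fun'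
    (measurable_dispersiveIntegrand α l).aestronglyMeasurable
    (ae_of_all _ (norm_dispersiveIntegrand_le α l))

lemma two_mul_smul_dispersiveIntegrand_sq {η : ℝ} (hη : 0 < η) :
    (2 * η) • dispersiveIntegrand α l (η ^ 2) =
      2 * Complex.exp (-Complex.I * ((Real.pi / 4 : ℝ) : ℂ)) *
        Complex.exp (Complex.I * (rootPhase α l η : ℂ)) := by
  have hamp : (η ^ 2) ^ (-(2⁻¹) : ℝ) = η⁻¹ := by
    rw [← Real.rpow_natCast, ← Real.rpow_mul hη.le, ← Real.rpow_neg_one η]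
    norm_num
  have hphase : l * η ^ 2 + η ^ 2 * (η ^ 2) ^ α = rootPhase α l η := by
    rw [rootPhase, Real.rpow_add hη, Real.rpow_mul hη.le, Real.rpow_two, mul_comm (η ^ 2)]
  rw [dispersiveIntegrand, Real.sign_of_pos (by positivity), abs_of_pos (by positivity), hamp,
    hphase, Complex.real_smul]
  have : (η : ℂ) ≠ 0 := by exact_mod_cast hη.ne'
  push_cast
  field_simp

lemma integral_dispersiveIntegrand_eq (hR : 0 < R) (hRR' : R ≤ R') :
    ∫ ξ in R..R', dispersiveIntegrand α l ξ =
      2 * Complex.exp (-Complex.I * ((Real.pi / 4 : ℝ) : ℂ)) *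
        ∫ η in √R..√R', Complex.exp (Complex.I * (rootPhase α l η : ℂ)) := by
  have hpos : ∀ η ∈ Set.uIcc √R √R', 0 < η := fun η hη =>
    (Real.sqrt_pos.2 hR).trans_le (Set.uIcc_of_le (Real.sqrt_le_sqrt hRR') ▸ hη).1
  have hsubst := intervalIntegral.integral_deriv_smul_comp_of_deriv_nonneg
    (f := fun η => η ^ 2) (f' := fun η => 2 * η) (g := dispersiveIntegrand α l)
    (continuous_pow 2).continuousOn (fun η _ => by simpa using hasDerivAt_pow 2 η)
    fun η hη => mul_nonneg zero_le_two (hpos η (Set.Ioo_subset_Icc_self hη)).le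
  rw [Real.sq_sqrt hR.le, Real.sq_sqrt (hR.le.trans hRR')] at hsubst
  rw [← hsubst, ← intervalIntegral.integral_const_mul]
  exact intervalIntegral.integral_congr fun η hη => two_mul_smul_dispersiveIntegrand_sq (hpos η hη)

lemma Fpartial_sub_Fpartial (α l R R' : ℝ) :
    Fpartial α l R' - Fpartial α l R = (∫ ξ in R..R', dispersiveIntegrand α l ξ) -
      conj (∫ ξ in R..R', dispersiveIntegrand α l ξ) := by
  have hint := intervalIntegrable_dispersiveIntegrand α l
  have hreflect : ∫ ξ in (-R)..(-R'), dispersiveIntegrand α l ξ =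
      conj (∫ ξ in R..R', dispersiveIntegrand α l ξ) := by
    have hconj := intervalIntegral.intervalIntegral_eq_integral_uIoc
      (fun ξ => conj (dispersiveIntegrand α l ξ)) R R' volume
    rw [integral_conj] at hconj
    rw [← intervalIntegral.integral_comp_neg, intervalIntegral.integral_symm]
    simp only [dispersiveIntegrand_neg, intervalIntegral.integral_neg, neg_neg, hconj,
      intervalIntegral.intervalIntegral_eq_integral_uIoc (dispersiveIntegrand α l),
      Complex.real_smul, map_mul, Complex.conj_ofReal]
  change (∫ ξ in (-R')..R', dispersiveIntegrand α l ξ) -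
    ∫ ξ in (-R)..R, dispersiveIntegrand α l ξ = _
  rw [intervalIntegral.integral_interval_sub_interval_comm' (hint _ _) (hint _ _) (hint _ _),
    hreflect]

lemma norm_Fpartial_sub_Fpartial_le (hα : 0 < α) (l : ℝ) (hR : 0 < R) (hRR' : R ≤ R') :
    ‖Fpartial α l R' - Fpartial α l R‖ ≤ 4 * rootPhaseTail α √R := by
  have hunit : ‖Complex.exp (-Complex.I * ((Real.pi / 4 : ℝ) : ℂ))‖ = 1 := by
    rw [neg_mul, Complex.exp_neg, norm_inv, norm_cexp_I_mul_ofReal, inv_one]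
  have htail : ‖∫ ξ in R..R', dispersiveIntegrand α l ξ‖ ≤ 2 * rootPhaseTail α √R := by
    rw [integral_dispersiveIntegrand_eq hR hRR', norm_mul, norm_mul, hunit, Complex.norm_two,
      mul_one]
    gcongr
    exact norm_integral_cexp_rootPhase_le hα l (Real.sqrt_pos.2 hR) (Real.sqrt_le_sqrt hRR')
  rw [Fpartial_sub_Fpartial]
  refine (norm_sub_le _ _).trans ?_
  rw [RCLike.norm_conj]
  linarith

lemma exists_zeroAtInfty_eq_Fpartial (α R : ℝ) :
    ∃ G : C₀(ℝ, ℂ), ⇑G = fun l => Fpartial α l R := by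
  obtain ⟨G, hG⟩ := exists_zeroAtInfty_eq_integral_cexp_mul
    ((intervalIntegrable_dispersiveIntegrand α 0 (-R) R).def'.integrable_indicator
      measurableSet_uIoc)
  refine ⟨(if -R ≤ R then 1 else -1 : ℝ) • G, funext fun l => ?_⟩
  change (if -R ≤ R then 1 else -1 : ℝ) • G l = ∫ ξ in (-R)..R, dispersiveIntegrand α l ξ
  rw [hG, intervalIntegral.intervalIntegral_eq_integral_uIoc,
    ← integral_indicator measurableSet_uIoc]
  congr 2 with ξ
  by_cases hξ : ξ ∈ Set.uIoc (-R) R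
  · simp only [Set.indicator_of_mem hξ, ← dispersiveIntegrand_eq_cexp_mul]
  · simp only [Set.indicator_of_notMem hξ, mul_zero]

lemma tendstoUniformly_Fpartial {F : ℝ → ℂ} (hα : 0 < α)
    (hF : ∀ l, Tendsto (fun R => Fpartial α l R) atTop (nhds (F l))) :
    TendstoUniformly (fun R l => Fpartial α l R) F atTop := by
  have htail : Tendsto (fun R => 4 * rootPhaseTail α √R) atTop (nhds 0) := by
    simpa using ((tendsto_rootPhaseTail hα).comp Real.tendsto_sqrt_atTop).const_mul 4
  rw [Metric.tendstoUniformly_iff]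
  intro ε hε
  filter_upwards [htail.eventually_lt_const hε, eventually_gt_atTop 0] with R hRε hR l
  refine lt_of_le_of_lt ?_ hRε
  rw [dist_eq_norm]
  refine le_of_tendsto ((hF l).sub_const _).norm ?_
  filter_upwards [eventually_ge_atTop R] with R' hRR'
  exact norm_Fpartial_sub_Fpartial_le hα l hR hRR'

lemma exists_zeroAtInfty_of_tendsto_Fpartial {F : ℝ → ℂ} (hα : 0 < α)
    (hF : ∀ l, Tendsto (fun R => Fpartial α l R) atTop (nhds (F l))) :
    ∃ G : C₀(ℝ, ℂ), ⇑G = F := by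
  choose G hG using exists_zeroAtInfty_eq_Fpartial α
  exact exists_zeroAtInfty_of_tendstoUniformly (G := G)
    (by simpa only [hG] using tendstoUniformly_Fpartial hα hF)

end DispersiveIntegral

section L1Pairing

variable {X 𝕜 : Type*} [MeasurableSpace X] [RCLike 𝕜] {μ : Measure X}

lemma norm_integral_mul_le_of_norm_le {φ h : X → 𝕜} {M : ℝ} (hM : ∀ x, ‖φ x‖ ≤ M)
    (hh : Integrable h μ) : ‖∫ x, φ x * h x ∂μ‖ ≤ M * ∫ x, ‖h x‖ ∂μ := by
  rw [← integral_const_mul]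
  refine norm_integral_le_of_norm_le (hh.norm.const_mul M) (ae_of_all _ fun x => ?_)
  rw [norm_mul]
  gcongr
  exact hM x

variable {ι : Type*} {l : Filter ι} [l.IsCountablyGenerated]

lemma tendsto_integral_mul_const {φ : ι → X → 𝕜} {φ₀ h : X → 𝕜} {M : ℝ}
    (hφm : ∀ᶠ i in l, AEStronglyMeasurable (φ i) μ) (hM : ∀ᶠ i in l, ∀ x, ‖φ i x‖ ≤ M)
    (hφ : ∀ x, Tendsto (fun i => φ i x) l (nhds (φ₀ x))) (hh : Integrable h μ) :
    Tendsto (fun i => ∫ x, φ i x * h x ∂μ) l (nhds (∫ x, φ₀ x * h x ∂μ)) := by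
  refine tendsto_integral_filter_of_dominated_convergence (fun x => M * ‖h x‖) ?_ ?_
    (hh.norm.const_mul M) (ae_of_all _ fun x => (hφ x).mul_const _)
  · filter_upwards [hφm] with i hi using hi.mul hh.aestronglyMeasurable
  · filter_upwards [hM] with i hi
    refine ae_of_all _ fun x => ?_
    rw [norm_mul]
    gcongr
    exact hi x

lemma tendsto_integral_mul {φ h : ι → X → 𝕜} {φ₀ h₀ : X → 𝕜} {M : ℝ}
    (hφm : ∀ᶠ i in l, AEStronglyMeasurable (φ i) μ) (hM : ∀ᶠ i in l, ∀ x, ‖φ i x‖ ≤ M)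
    (hφ : ∀ x, Tendsto (fun i => φ i x) l (nhds (φ₀ x)))
    (hh : ∀ᶠ i in l, Integrable (h i) μ) (hh₀ : Integrable h₀ μ)
    (hlim : Tendsto (fun i => ∫ x, ‖h i x - h₀ x‖ ∂μ) l (nhds 0)) :
    Tendsto (fun i => ∫ x, φ i x * h i x ∂μ) l (nhds (∫ x, φ₀ x * h₀ x ∂μ)) := by
  have hdiff : Tendsto (fun i => ∫ x, φ i x * (h i x - h₀ x) ∂μ) l (nhds 0) := by
    refine squeeze_zero_norm' ?_ (by simpa using hlim.const_mul M)
    filter_upwards [hM, hh] with i hiM hi using norm_integral_mul_le_of_norm_le hiM (hi.sub hh₀)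
  refine (zero_add (∫ x, φ₀ x * h₀ x ∂μ) ▸
    hdiff.add (tendsto_integral_mul_const hφm hM hφ hh₀)).congr' ?_
  filter_upwards [hφm, hM, hh] with i him hiM hi
  have hadd := integral_add ((hi.sub hh₀).bdd_mul him (ae_of_all _ hiM))
    (hh₀.bdd_mul him (ae_of_all _ hiM))
  simpa only [Pi.sub_apply, mul_sub, sub_add_cancel] using hadd.symm

lemma continuous_integral_comp_sub_mul {E : Type*} [TopologicalSpace E] [AddGroup E]
    [ContinuousSub E] [FirstCountableTopology E] [MeasurableSpace E] [OpensMeasurableSpace E]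
    {μ : Measure E} {Φ h : E → 𝕜} {M : ℝ} (hΦ : Continuous Φ) (hM : ∀ q, ‖Φ q‖ ≤ M)
    (hh : Integrable h μ) : Continuous fun z => ∫ p, Φ (z - p) * h p ∂μ :=
  continuous_iff_continuousAt.2 fun z => tendsto_integral_mul_const (M := M)
    (Eventually.of_forall fun _ => (hΦ.comp (continuous_sub_left _)).aestronglyMeasurable)
    (Eventually.of_forall fun _ _ => hM _)
    (fun p => (hΦ.comp (continuous_sub_right p)).tendsto z) hh

end L1Pairing

section WeakDerivative

lemma hasDerivAt_of_tendsto_of_norm_le {ι V : Type*} [NormedAddCommGroup V] [NormedSpace ℝ V]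
    [CompleteSpace V] {l : Filter ι} [l.NeBot] [l.IsCountablyGenerated] {u u' : ι → ℝ → V}
    {w w' : ℝ → V} {C : ℝ} (hu : ∀ i r, HasDerivAt (u i) (u' i r) r)
    (hu' : ∀ i, Continuous (u' i)) (hC : ∀ i r, ‖u' i r‖ ≤ C)
    (hw : ∀ r, Tendsto (fun i => u i r) l (nhds (w r)))
    (hw' : ∀ r, Tendsto (fun i => u' i r) l (nhds (w' r))) (hw'c : Continuous w') (x : ℝ) :
    HasDerivAt w (w' x) x := by
  have hftc : ∀ b, ∫ r in x..b, w' r = w b - w x := fun b => by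
    have hint : Tendsto (fun i => ∫ r in x..b, u' i r) l (nhds (∫ r in x..b, w' r)) :=
      intervalIntegral.tendsto_integral_filter_of_dominated_convergence (fun _ => C)
        (Eventually.of_forall fun i => (hu' i).aestronglyMeasurable)
        (Eventually.of_forall fun i => ae_of_all _ fun r _ => hC i r)
        intervalIntegrable_const (ae_of_all _ fun r _ => hw' r)
    refine tendsto_nhds_unique hint (((hw b).sub (hw x)).congr fun i => ?_)
    exact (intervalIntegral.integral_eq_sub_of_hasDerivAt (fun r _ => hu i r)
      ((hu' i).intervalIntegrable _ _)).symm
  simpa only [hftc, sub_add_cancel] using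
    (hw'c.integral_hasStrictDerivAt x x).hasDerivAt.add_const (w x)

variable {E 𝕜 : Type*} [NormedAddCommGroup E] [NormedSpace ℝ E] [RCLike 𝕜]

lemma exists_contDiff_hasCompactSupport_tendsto [FiniteDimensional ℝ E] {Φ : E → 𝕜} {M : ℝ}
    (hΦ : Continuous Φ) (hM : ∀ q, ‖Φ q‖ ≤ M) :
    ∃ φ : ℕ → E → 𝕜, (∀ n, ContDiff ℝ (⊤ : ℕ∞) (φ n)) ∧ (∀ n, HasCompactSupport (φ n)) ∧
      (∀ n q, ‖φ n q‖ ≤ M + 1) ∧ ∀ q, Tendsto (fun n => φ n q) atTop (nhds (Φ q)) := by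
  let χ (n : ℕ) : ContDiffBump (0 : E) := ⟨n + 1, n + 2, by positivity, by linarith⟩
  have hχΦ (n : ℕ) : Continuous fun q => χ n q • Φ q := (χ n).continuous.smul hΦ
  choose φ hφ hdist hsupp using fun n : ℕ => (hχΦ n).exists_contDiff_approx (⊤ : ℕ∞)
    (continuous_const (y := 1 / ((n : ℝ) + 1))) fun _ => Nat.one_div_pos_of_nat
  refine ⟨φ, hφ, fun n => ((χ n).hasCompactSupport.smul_right (f' := Φ)).mono (hsupp n),
    fun n q => ?_, fun q => ?_⟩
  · have hχM : ‖χ n q • Φ q‖ ≤ M := by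
      rw [norm_smul, Real.norm_of_nonneg (χ n).nonneg]
      exact (mul_le_of_le_one_left (norm_nonneg _) (χ n).le_one).trans (hM q)
    have hle : dist (φ n q) (χ n q • Φ q) ≤ 1 :=
      (hdist n q).le.trans (div_le_one_of_le₀ (by simp) (by positivity))
    rw [dist_eq_norm] at hle
    linarith [norm_le_norm_add_norm_sub' (φ n q) (χ n q • Φ q)]
  · obtain ⟨N, hN⟩ := exists_nat_ge ‖q‖
    rw [tendsto_iff_dist_tendsto_zero]
    refine squeeze_zero' (Eventually.of_forall fun _ => dist_nonneg) ?_
      (tendsto_one_div_add_atTop_nhds_zero_nat (𝕜 := ℝ))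
    filter_upwards [eventually_ge_atTop N] with n hn
    have hone : χ n q = 1 := (χ n).one_of_mem_closedBall <| mem_closedBall_zero_iff.2 <|
      hN.trans ((Nat.cast_le.2 hn).trans (lt_add_one (n : ℝ)).le)
    simpa only [hone, one_smul] using (hdist n q).le

lemma lineDeriv_prod_one_zero {V : Type*} [NormedAddCommGroup V] [NormedSpace ℝ V]
    (ψ : ℝ × E → V) (p : ℝ × E) :
    lineDeriv ℝ ψ p (1, 0) = deriv (fun x => ψ (x, p.2)) p.1 := by
  simpa [lineDeriv, Prod.add_def] using deriv_comp_const_add (fun x => ψ (x, p.2)) p.1 0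

variable [MeasurableSpace E] {μ : Measure E} {f g : E → 𝕜} {v : E}

/-- `g` is the distributional derivative of `f` in the direction `v`, tested against smooth
compactly supported functions. -/
def IsWeakLineDeriv (μ : Measure E) (f g : E → 𝕜) (v : E) : Prop :=
  ∀ ψ : E → 𝕜, ContDiff ℝ (⊤ : ℕ∞) ψ → HasCompactSupport ψ →
    ∫ p, f p * lineDeriv ℝ ψ p v ∂μ = -∫ p, g p * ψ p ∂μ

variable [BorelSpace E] [SFinite μ] [μ.IsAddLeftInvariant]

lemma IsWeakLineDeriv.hasDerivAt_integral_of_hasCompactSupport (hfg : IsWeakLineDeriv μ f g v)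
    (hf : Integrable f μ) {φ : E → 𝕜} (hφ : ContDiff ℝ (⊤ : ℕ∞) φ) (hs : HasCompactSupport φ)
    (z : E) (r : ℝ) :
    HasDerivAt (fun r : ℝ => ∫ p, φ (z + r • v - p) * f p ∂μ)
      (∫ p, φ (z + r • v - p) * g p ∂μ) r := by
  have hline : HasDerivAt (fun r : ℝ => z + r • v) v r := by
    simpa using ((hasDerivAt_id r).smul_const v).const_add z
  have hreflect : ∀ p, lineDeriv ℝ (fun p => φ (z + r • v - p)) p v =
      -fderiv ℝ φ (z + r • v - p) v := fun p => by
    have hsub : HasFDerivAt (fun p => z + r • v - p) (-ContinuousLinearMap.id ℝ E) p :=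
      (hasFDerivAt_id p).const_sub _
    have hcomp := ((hφ.differentiable (by simp) _).hasFDerivAt.comp p hsub).hasLineDerivAt v
    simpa [Function.comp_def] using hcomp.lineDeriv
  have htest := hfg (fun p => φ (z + r • v - p)) (hφ.comp (contDiff_const.sub contDiff_id))
    (hs.comp_homeomorph (Homeomorph.subLeft (z + r • v)))
  simp only [hreflect, mul_neg, integral_neg, neg_inj] at htest
  have hderiv := (hs.hasFDerivAt_convolution_right (ContinuousLinearMap.mul ℝ 𝕜)
    hf.locallyIntegrable (hφ.of_le (by simp)) (z + r • v)).comp_hasDerivAt r hline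
  rw [convolution_precompR_apply _ hf.locallyIntegrable (hs.fderiv ℝ)
    (hφ.continuous_fderiv (by simp))] at hderiv
  simp only [mul_comm (φ _)]
  exact hderiv.congr_deriv htest

lemma IsWeakLineDeriv.hasDerivAt_integral [FiniteDimensional ℝ E] (hfg : IsWeakLineDeriv μ f g v)
    (hf : Integrable f μ) (hg : Integrable g μ) {Φ : E → 𝕜} {M : ℝ} (hΦ : Continuous Φ)
    (hM : ∀ q, ‖Φ q‖ ≤ M) (z : E) (r : ℝ) :
    HasDerivAt (fun r : ℝ => ∫ p, Φ (z + r • v - p) * f p ∂μ)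
      (∫ p, Φ (z + r • v - p) * g p ∂μ) r := by
  obtain ⟨φ, hφ, hs, hφM, hlim⟩ := exists_contDiff_hasCompactSupport_tendsto hΦ hM
  have hline : Continuous fun r : ℝ => z + r • v := by fun_prop
  have htendsto {h : E → 𝕜} (hh : Integrable h μ) (r : ℝ) :
      Tendsto (fun n => ∫ p, φ n (z + r • v - p) * h p ∂μ) atTop
        (nhds (∫ p, Φ (z + r • v - p) * h p ∂μ)) :=
    tendsto_integral_mul_const (M := M + 1)
      (Eventually.of_forall fun n =>
        ((hφ n).continuous.comp (continuous_sub_left _)).aestronglyMeasurable)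
      (Eventually.of_forall fun n _ => hφM n _) (fun _ => hlim _) hh
  exact hasDerivAt_of_tendsto_of_norm_le
    (fun n => hfg.hasDerivAt_integral_of_hasCompactSupport hf (hφ n) (hs n) z)
    (fun n => (continuous_integral_comp_sub_mul (hφ n).continuous (hφM n) hg).comp hline)
    (fun n r => norm_integral_mul_le_of_norm_le (fun _ => hφM n _) hg) (htendsto hf) (htendsto hg)
    ((continuous_integral_comp_sub_mul hΦ hM hg).comp hline) r

end WeakDerivative

section L1Curve

variable {E 𝕜 : Type*} [MeasurableSpace E] [RCLike 𝕜] {μ : Measure E}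

/-- `h` is a curve of `μ`-integrable functions, continuous on `I` for the `L¹` seminorm. -/
structure L1ContinuousOn (h : ℝ → E → 𝕜) (I : Set ℝ) (μ : Measure E) : Prop where
  integrable : ∀ s ∈ I, Integrable (h s) μ
  tendsto : ∀ s ∈ I,
    Tendsto (fun s' => ∫ p, ‖h s' p - h s p‖ ∂μ) (nhdsWithin s I) (nhds 0)

namespace L1ContinuousOn

variable {h : ℝ → E → 𝕜} {I J : Set ℝ}

lemma mono (hh : L1ContinuousOn h I μ) (hJI : J ⊆ I) : L1ContinuousOn h J μ :=
  ⟨fun s hs => hh.integrable s (hJI hs),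
    fun s hs => (hh.tendsto s (hJI hs)).mono_left (nhdsWithin_mono s hJI)⟩

lemma continuousOn_integral_norm (hh : L1ContinuousOn h I μ) :
    ContinuousOn (fun s => ∫ p, ‖h s p‖ ∂μ) I := fun s hs => by
  rw [ContinuousWithinAt, tendsto_iff_dist_tendsto_zero]
  refine squeeze_zero' (Eventually.of_forall fun _ => dist_nonneg) ?_ (hh.tendsto s hs)
  filter_upwards [self_mem_nhdsWithin] with s' hs'
  have hsub := (hh.integrable s' hs').norm.sub (hh.integrable s hs).norm
  rw [Real.dist_eq, ← integral_sub (hh.integrable s' hs').norm (hh.integrable s hs).norm]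
  exact abs_integral_le_integral_abs.trans <| integral_mono hsub.abs
    ((hh.integrable s' hs').sub (hh.integrable s hs)).norm fun p => abs_norm_sub_norm_le _ _

end L1ContinuousOn

end L1Curve

section DuhamelTerm

variable {E 𝕜 : Type*} [NormedAddCommGroup E] [RCLike 𝕜]

/-- `K τ` is a convolution kernel, jointly continuous in time `τ > 0` and space, which may blow up
as `τ → 0` but is then dominated by the integrable function `b`. -/
structure IsSingularKernel (K : ℝ → E → 𝕜) (b : ℝ → ℝ) : Prop where
  continuousOn : ContinuousOn (fun q : ℝ × E => K q.1 q.2) (Set.Ioi 0 ×ˢ Set.univ)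
  norm_le : ∀ τ, 0 < τ → ∀ q, ‖K τ q‖ ≤ b τ
  continuousOn_bound : ContinuousOn b (Set.Ioi 0)
  integrableOn_bound : ∀ t, IntegrableOn b (Set.Ioo 0 t)

/-- The Duhamel term `∫₀ᵗ K(t - s) ∗ h(s) ds` at the point `z`. -/
noncomputable def duhamel [MeasurableSpace E] (μ : Measure E) (K h : ℝ → E → 𝕜) (t : ℝ)
    (z : E) : 𝕜 :=
  ∫ s in Set.Ioo 0 t, ∫ p, K (t - s) (z - p) * h s p ∂μ

namespace IsSingularKernel

variable {K h f g : ℝ → E → 𝕜} {b : ℝ → ℝ} {t τ : ℝ}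

lemma continuous (hK : IsSingularKernel K b) (hτ : 0 < τ) : Continuous (K τ) :=
  hK.continuousOn.comp_continuous (Continuous.prodMk_right τ) fun _ => ⟨hτ, trivial⟩

lemma integrableOn_bound_comp_sub_left (hK : IsSingularKernel K b) (t : ℝ) :
    IntegrableOn (fun s => b (t - s)) (Set.Ioo 0 t) := by
  rcases le_or_gt t 0 with ht | ht
  · simp [Set.Ioo_eq_empty_of_le ht]
  have hb := (intervalIntegrable_iff_integrableOn_Ioo_of_le ht.le).2 (hK.integrableOn_bound t)
  have hrefl := (hb.comp_sub_left t).symm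
  rwa [sub_zero, sub_self, intervalIntegrable_iff_integrableOn_Ioo_of_le ht.le] at hrefl

variable [MeasurableSpace E] {μ : Measure E}

lemma norm_integral_mul_le (hK : IsSingularKernel K b) (hτ : 0 < τ) {u : E → 𝕜}
    (hu : Integrable u μ) (z : E) :
    ‖∫ p, K τ (z - p) * u p ∂μ‖ ≤ b τ * ∫ p, ‖u p‖ ∂μ :=
  norm_integral_mul_le_of_norm_le (fun _ => hK.norm_le τ hτ _) hu

lemma exists_ae_norm_integral_mul_le (hK : IsSingularKernel K b)
    (hh : L1ContinuousOn h (Set.Icc 0 t) μ) :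
    ∃ B : ℝ → ℝ, IntegrableOn B (Set.Ioo 0 t) ∧ ∀ᵐ s ∂volume.restrict (Set.Ioo 0 t), ∀ z,
      ‖∫ p, K (t - s) (z - p) * h s p ∂μ‖ ≤ B s := by
  obtain ⟨C, hC⟩ := isCompact_Icc.exists_bound_of_continuousOn hh.continuousOn_integral_norm
  refine ⟨fun s => b (t - s) * C, (hK.integrableOn_bound_comp_sub_left t).mul_const C,
    (ae_restrict_mem measurableSet_Ioo).mono fun s hs z => ?_⟩
  have hτ : 0 < t - s := sub_pos.2 hs.2
  have hs' := Set.Ioo_subset_Icc_self hs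
  calc ‖∫ p, K (t - s) (z - p) * h s p ∂μ‖
    _ ≤ b (t - s) * ∫ p, ‖h s p‖ ∂μ := hK.norm_integral_mul_le hτ (hh.integrable s hs') z
    _ ≤ b (t - s) * C := mul_le_mul_of_nonneg_left ((le_abs_self _).trans (hC s hs'))
      ((norm_nonneg _).trans (hK.norm_le _ hτ z))

variable [BorelSpace E]

lemma aestronglyMeasurable_comp_sub_left (hK : IsSingularKernel K b) (hτ : 0 < τ) (z : E) :
    AEStronglyMeasurable (fun p => K τ (z - p)) μ :=
  ((hK.continuous hτ).comp (continuous_sub_left z)).aestronglyMeasurable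

lemma integrable_mul (hK : IsSingularKernel K b) (hτ : 0 < τ) {u : E → 𝕜}
    (hu : Integrable u μ) (z : E) : Integrable (fun p => K τ (z - p) * u p) μ :=
  hu.bdd_mul (hK.aestronglyMeasurable_comp_sub_left hτ z)
    (ae_of_all _ fun _ => hK.norm_le τ hτ _)

lemma continuousOn_integral_mul (hK : IsSingularKernel K b)
    (hh : L1ContinuousOn h (Set.Icc 0 t) μ) (z : E) :
    ContinuousOn (fun s => ∫ p, K (t - s) (z - p) * h s p ∂μ) (Set.Ioo 0 t) := fun s hs => by
  have hpos : ∀ {s}, s ∈ Set.Ioo 0 t → 0 < t - s := fun hs => sub_pos.2 hs.2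
  have hsub : ContinuousWithinAt (t - ·) (Set.Ioo 0 t) s := by fun_prop
  have hb : Tendsto (fun s' => b (t - s')) (nhdsWithin s (Set.Ioo 0 t)) (nhds (b (t - s))) :=
    (hK.continuousOn_bound _ (hpos hs)).comp hsub fun _ => hpos
  refine tendsto_integral_mul (M := b (t - s) + 1) ?_ ?_ (fun p => ?_) ?_
    (hh.integrable s (Set.Ioo_subset_Icc_self hs)) ((hh.mono Set.Ioo_subset_Icc_self).tendsto s hs)
  · filter_upwards [self_mem_nhdsWithin] with s' hs'
    exact hK.aestronglyMeasurable_comp_sub_left (hpos hs') z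
  · filter_upwards [self_mem_nhdsWithin, hb.eventually_le_const (lt_add_one _)] with s' hs' hle p
    exact (hK.norm_le _ (hpos hs') _).trans hle
  · exact ContinuousWithinAt.comp (f := fun s => (t - s, z - p))
      (hK.continuousOn _ ⟨hpos hs, trivial⟩) (hsub.prodMk continuousWithinAt_const)
      fun _ hs' => ⟨hpos hs', trivial⟩
  · filter_upwards [self_mem_nhdsWithin] with s' hs'
    exact hh.integrable s' (Set.Ioo_subset_Icc_self hs')

lemma aestronglyMeasurable_integral_mul (hK : IsSingularKernel K b)
    (hh : L1ContinuousOn h (Set.Icc 0 t) μ) (z : E) :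
    AEStronglyMeasurable (fun s => ∫ p, K (t - s) (z - p) * h s p ∂μ)
      (volume.restrict (Set.Ioo 0 t)) :=
  (hK.continuousOn_integral_mul hh z).aestronglyMeasurable measurableSet_Ioo

lemma integrableOn_integral_mul (hK : IsSingularKernel K b)
    (hh : L1ContinuousOn h (Set.Icc 0 t) μ) (z : E) :
    IntegrableOn (fun s => ∫ p, K (t - s) (z - p) * h s p ∂μ) (Set.Ioo 0 t) := by
  obtain ⟨B, hB, hle⟩ := hK.exists_ae_norm_integral_mul_le hh
  exact Integrable.mono' hB (hK.aestronglyMeasurable_integral_mul hh z) (hle.mono fun _ hs => hs z)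

lemma tendsto_duhamel {ι : Type*} {l : Filter ι} [l.IsCountablyGenerated]
    (hK : IsSingularKernel K b) (hh : L1ContinuousOn h (Set.Icc 0 t) μ) {z : ι → E}
    {k : ℝ → E → 𝕜} (hk : ∀ τ, 0 < τ → ∀ p, Tendsto (fun i => K τ (z i - p)) l (nhds (k τ p))) :
    Tendsto (fun i => duhamel μ K h t (z i)) l
      (nhds (∫ s in Set.Ioo 0 t, ∫ p, k (t - s) p * h s p ∂μ)) := by
  obtain ⟨B, hB, hle⟩ := hK.exists_ae_norm_integral_mul_le hh
  refine tendsto_integral_filter_of_dominated_convergence B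
    (Eventually.of_forall fun i => hK.aestronglyMeasurable_integral_mul hh (z i))
    (Eventually.of_forall fun i => hle.mono fun _ hs => hs (z i)) hB
    ((ae_restrict_mem measurableSet_Ioo).mono fun s hs => ?_)
  have hτ : 0 < t - s := sub_pos.2 hs.2
  exact tendsto_integral_mul_const (M := b (t - s))
    (Eventually.of_forall fun i => hK.aestronglyMeasurable_comp_sub_left hτ (z i))
    (Eventually.of_forall fun _ _ => hK.norm_le _ hτ _) (hk _ hτ)
    (hh.integrable s (Set.Ioo_subset_Icc_self hs))

lemma continuous_duhamel (hK : IsSingularKernel K b) (hh : L1ContinuousOn h (Set.Icc 0 t) μ) :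
    Continuous (duhamel μ K h t) :=
  continuous_iff_continuousAt.2 fun z => hK.tendsto_duhamel hh fun _ hτ p =>
    ((hK.continuous hτ).comp (continuous_sub_right p)).tendsto z

lemma hasDerivAt_duhamel [NormedSpace ℝ E] [FiniteDimensional ℝ E] [SFinite μ]
    [μ.IsAddLeftInvariant] {v : E} (hK : IsSingularKernel K b)
    (hf : L1ContinuousOn f (Set.Icc 0 t) μ) (hg : L1ContinuousOn g (Set.Icc 0 t) μ)
    (hfg : ∀ s ∈ Set.Icc 0 t, IsWeakLineDeriv μ (f s) (g s) v) (z : E) (r : ℝ) :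
    HasDerivAt (fun r : ℝ => duhamel μ K f t (z + r • v)) (duhamel μ K g t (z + r • v)) r := by
  obtain ⟨B, hB, hle⟩ := hK.exists_ae_norm_integral_mul_le hg
  refine (hasDerivAt_integral_of_dominated_loc_of_deriv_le univ_mem
    (Eventually.of_forall fun r => hK.aestronglyMeasurable_integral_mul hf (z + r • v))
    (hK.integrableOn_integral_mul hf _) (hK.aestronglyMeasurable_integral_mul hg _)
    (hle.mono fun s hs r _ => hs (z + r • v)) hB
    ((ae_restrict_mem measurableSet_Ioo).mono fun s hs r _ => ?_)).2
  have hτ : 0 < t - s := sub_pos.2 hs.2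
  have hs' := Set.Ioo_subset_Icc_self hs
  exact (hfg s hs').hasDerivAt_integral (hf.integrable s hs') (hg.integrable s hs')
    (hK.continuous hτ) (hK.norm_le _ hτ) z r

end IsSingularKernel

end DuhamelTerm

section SelfSimilarKernel

open scoped ZeroAtInfty

variable {α τ : ℝ}

lemma selfSimilarExponent_lt_one (hα : 0 < α) : (α + 2) / (2 * (α + 1)) < 1 := by
  rw [div_lt_one (by positivity)]
  linarith

lemma continuousOn_Akernel {F : ℝ → ℂ} (hF : Continuous F) (α : ℝ) :
    ContinuousOn (fun q : ℝ × ℝ × ℝ => Akernel F α q.1 q.2.1 q.2.2) (Set.Ioi 0 ×ˢ Set.univ) := by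
  have hrpow (r : ℝ) :
      ContinuousOn (fun q : ℝ × ℝ × ℝ => q.1 ^ r) (Set.Ioi 0 ×ˢ Set.univ) :=
    continuousOn_fst.rpow_const fun q hq => Or.inl (ne_of_gt hq.1)
  have hself : ContinuousOn (fun q : ℝ × ℝ × ℝ => selfSim α q.1 q.2.1 q.2.2)
      (Set.Ioi 0 ×ˢ Set.univ) :=
    ((by fun_prop : Continuous fun q : ℝ × ℝ × ℝ => q.2.1).continuousOn.mul (hrpow _)).add <|
      ContinuousOn.div (by fun_prop) (continuousOn_const.mul (hrpow _)) fun q hq =>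
        mul_ne_zero four_ne_zero (Real.rpow_pos_of_pos hq.1 _).ne'
  exact (Complex.continuous_ofReal.comp_continuousOn (hrpow _)).mul (hF.comp_continuousOn hself)

lemma isSingularKernel_Akernel (hα : 0 < α) (F : C₀(ℝ, ℂ)) :
    IsSingularKernel (fun τ (q : ℝ × ℝ) => Akernel F α τ q.1 q.2)
      (fun τ => ‖F‖ * τ ^ (-((α + 2) / (2 * (α + 1))) : ℝ)) where
  continuousOn := continuousOn_Akernel F.continuous α
  norm_le τ hτ q := by
    rw [Akernel, norm_mul, Complex.norm_real, Real.norm_of_nonneg (Real.rpow_nonneg hτ.le _),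
      mul_comm, ← ZeroAtInftyContinuousMap.norm_toBCF_eq_norm]
    gcongr
    exact F.toBCF.norm_coe_le_norm _
  continuousOn_bound := continuousOn_const.mul <|
    continuousOn_id.rpow_const fun _ hτ => Or.inl (ne_of_gt hτ)
  integrableOn_bound t := by
    have hrpow := intervalIntegral.intervalIntegrable_rpow' (a := 0) (b := t)
      (neg_lt_neg (selfSimilarExponent_lt_one hα))
    exact (hrpow.1.mono_set Set.Ioo_subset_Ioc_self).const_mul _

lemma tendsto_Akernel_cocompact (F : C₀(ℝ, ℂ)) (hτ : 0 < τ) (a y : ℝ) :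
    Tendsto (fun x => Akernel F α τ (x - a) y) (cocompact ℝ) (nhds 0) := by
  have hc : τ ^ (-(1 / (α + 1)) : ℝ) ≠ 0 := (Real.rpow_pos_of_pos hτ _).ne'
  have hself : Tendsto (fun x => selfSim α τ (x - a) y) (cocompact ℝ) (cocompact ℝ) :=
    (((Homeomorph.subRight a).trans (Homeomorph.mulRight₀ _ hc)).trans
      (Homeomorph.addRight _)).isClosedEmbedding.tendsto_cocompact
  simpa [Akernel] using ((zero_at_infty F).comp hself).const_mul
    ((τ ^ (-((α + 2) / (2 * (α + 1))) : ℝ) : ℝ) : ℂ)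

lemma tendsto_duhamel_Akernel_cocompact (hα : 0 < α) (F : C₀(ℝ, ℂ)) {h : ℝ → ℝ × ℝ → ℂ} {t : ℝ}
    (hh : L1ContinuousOn h (Set.Icc 0 t) volume) (y : ℝ) :
    Tendsto (fun x => duhamel volume (fun τ q => Akernel F α τ q.1 q.2) h t (x, y))
      (cocompact ℝ) (nhds 0) := by
  have : (cocompact ℝ).IsCountablyGenerated := by
    rw [cocompact_eq_atBot_atTop]
    infer_instance
  have hlim := (isSingularKernel_Akernel hα F).tendsto_duhamel hh (z := fun x => (x, y)) (k := 0)
    fun τ hτ p => tendsto_Akernel_cocompact F hτ p.1 (y - p.2)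
  simpa only [Pi.zero_apply, zero_mul, integral_zero] using hlim

end SelfSimilarKernel

/-- Treatment of the Duhamel term: if `f : [0,T] → L¹(ℝ²)` is continuous and `g(s)` is
the distributional `x`-derivative of `f(s)`, then for `t ∈ (0,T]` the function
`W(t,x,y) = ∫_0^t ∫_{ℝ²} A(t-s, x-x', y-y') f(s,x',y') dx'dy'ds` is well defined
(its inner integral is bounded by `c(t-s)^{-(α+2)/(2(α+1))}‖f(s)‖_{L¹}`, integrable in `s`
since `(α+2)/(2(α+1)) < 1`), is continuously differentiable in `x` with
`∂ₓW` given by the same expression with `g` in place of `f`, and `W(t,x,y) → 0` as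
`|x| → ∞` for fixed `y` and `t ∈ (0,T]`. -/
theorem duhamel_term_properties (α T : ℝ) (hα : 0 < α) (hT : 0 < T)
    (F : ℝ → ℂ)
    (hF : ∀ l : ℝ, Tendsto (fun R : ℝ => Fpartial α l R) atTop (nhds (F l)))
    (f g : ℝ → ℝ × ℝ → ℂ)
    (hfInt : ∀ s ∈ Set.Icc (0 : ℝ) T, Integrable (f s))
    (hgInt : ∀ s ∈ Set.Icc (0 : ℝ) T, Integrable (g s))
    (hfCont : ∀ s ∈ Set.Icc (0 : ℝ) T,
      Tendsto (fun s' : ℝ => ∫ p : ℝ × ℝ, ‖f s' p - f s p‖)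
        (nhdsWithin s (Set.Icc (0 : ℝ) T)) (nhds 0))
    (hgCont : ∀ s ∈ Set.Icc (0 : ℝ) T,
      Tendsto (fun s' : ℝ => ∫ p : ℝ × ℝ, ‖g s' p - g s p‖)
        (nhdsWithin s (Set.Icc (0 : ℝ) T)) (nhds 0))
    (hdistrib : ∀ s ∈ Set.Icc (0 : ℝ) T, ∀ ψ : ℝ × ℝ → ℂ,
      ContDiff ℝ (⊤ : ℕ∞) ψ → HasCompactSupport ψ →
      ∫ p : ℝ × ℝ, f s p * deriv (fun x : ℝ => ψ (x, p.2)) p.1 =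
        -∫ p : ℝ × ℝ, g s p * ψ p) :
    (α + 2) / (2 * (α + 1)) < 1 ∧
    ∀ t ∈ Set.Ioc (0 : ℝ) T,
      (∃ C : ℝ, ∀ s ∈ Set.Ioo (0 : ℝ) t, ∀ x y : ℝ,
        Integrable (fun p : ℝ × ℝ => Akernel F α (t - s) (x - p.1) (y - p.2) * f s p) ∧
        ‖∫ p : ℝ × ℝ, Akernel F α (t - s) (x - p.1) (y - p.2) * f s p‖ ≤
          C * (t - s) ^ (-((α + 2) / (2 * (α + 1))) : ℝ) * ∫ p : ℝ × ℝ, ‖f s p‖) ∧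
      (∀ x y : ℝ, IntegrableOn
        (fun s : ℝ => ∫ p : ℝ × ℝ, Akernel F α (t - s) (x - p.1) (y - p.2) * f s p)
        (Set.Ioo (0 : ℝ) t)) ∧
      (∀ y x : ℝ, HasDerivAt
        (fun x' : ℝ => ∫ s in Set.Ioo (0 : ℝ) t,
          ∫ p : ℝ × ℝ, Akernel F α (t - s) (x' - p.1) (y - p.2) * f s p)
        (∫ s in Set.Ioo (0 : ℝ) t,
          ∫ p : ℝ × ℝ, Akernel F α (t - s) (x - p.1) (y - p.2) * g s p) x) ∧
      (∀ y : ℝ, Continuous (fun x : ℝ => ∫ s in Set.Ioo (0 : ℝ) t,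
          ∫ p : ℝ × ℝ, Akernel F α (t - s) (x - p.1) (y - p.2) * g s p)) ∧
      (∀ y : ℝ, Tendsto (fun x : ℝ => ∫ s in Set.Ioo (0 : ℝ) t,
          ∫ p : ℝ × ℝ, Akernel F α (t - s) (x - p.1) (y - p.2) * f s p)
        (cocompact ℝ) (nhds 0)) := by
  obtain ⟨F, rfl⟩ := exists_zeroAtInfty_of_tendsto_Fpartial hα hF
  have hK := isSingularKernel_Akernel hα F
  refine ⟨selfSimilarExponent_lt_one hα, fun t ht => ?_⟩
  have htT : Set.Icc 0 t ⊆ Set.Icc 0 T := Set.Icc_subset_Icc_right ht.2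
  have hf : L1ContinuousOn f (Set.Icc 0 t) volume := L1ContinuousOn.mono ⟨hfInt, hfCont⟩ htT
  have hg : L1ContinuousOn g (Set.Icc 0 t) volume := L1ContinuousOn.mono ⟨hgInt, hgCont⟩ htT
  have hfg : ∀ s ∈ Set.Icc 0 t, IsWeakLineDeriv volume (f s) (g s) (1, 0) := fun s hs => by
    simpa only [IsWeakLineDeriv, lineDeriv_prod_one_zero] using hdistrib s (htT hs)
  have hline (x y : ℝ) : (0, y) + x • ((1 : ℝ), (0 : ℝ)) = (x, y) := by simp
  have hderiv (y x : ℝ) := hK.hasDerivAt_duhamel hf hg hfg (0, y) x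
  simp only [hline] at hderiv
  have hcont (y : ℝ) := (hK.continuous_duhamel hg).comp (Continuous.prodMk_left y)
  refine ⟨⟨‖F‖, fun s hs x y => ?_⟩, fun x y => hK.integrableOn_integral_mul hf (x, y),
    hderiv, hcont, tendsto_duhamel_Akernel_cocompact hα F hf⟩
  have hfs : Integrable (f s) := hf.integrable s (Set.Ioo_subset_Icc_self hs)
  have hτ : 0 < t - s := sub_pos.2 hs.2
  exact ⟨hK.integrable_mul hτ hfs (x, y), hK.norm_integral_mul_le hτ hfs (x, y)⟩
end

section
/- Let α > 0, β > (α+3)/2, t > 0, and define Ã(t,x,y) = t^{−1/2} ∫_{ℝ} sgn(ξ) e^{−i·sgn(ξ)·π/4} |ξ|^{−1/2} (1+|ξ|^α)^{1/2} (1+ξ²)^{−β/2} e^{−itξ/(1+|ξ|^α)} e^{i(x + y²/(4t))ξ} e^{i(y²/(4t))ξ|ξ|^α} dξ (an absolutely convergent integral). Then: (i) Ã(t,·,·) is continuous and bounded on ℝ²; (ii) Ã(t,·,·) is differentiable in x with ∂_x Ã(t,x,y) = i t^{−1/2} ∫_{ℝ} e^{−i·sgn(ξ)·π/4} |ξ|^{1/2}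 (1+|ξ|^α)^{1/2} (1+ξ²)^{−β/2} e^{−itξ/(1+|ξ|^α)} e^{i(x + y²/(4t))ξ} e^{i(y²/(4t))ξ|ξ|^α} dξ, which is also continuous and bounded; (iii) for every ψ ∈ L¹(ℝ²) and fixed y ∈ ℝ, (Ã(t,·,·) ⋆ ψ)(x,y) → 0 as |x| → ∞, and consequently the generalized Riemann integral lim_{a→−∞, b→+∞} ∫_{a}^{b} ((∂_x Ã)(t,·,·) ⋆ ψ)(x,y) dx equals 0 for every y ∈ ℝ. -/
open MeasureTheory Filter

/-- The `ξ`-integrand of the KP-BBM antiderivative kernel `Ã(t,x,y)`. -/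
noncomputable def AtildeInt (α β t x y : ℝ) (ξ : ℝ) : ℂ :=
  (Real.sign ξ : ℂ) *
    Complex.exp (-Complex.I * (Real.sign ξ : ℂ) * ((Real.pi / 4 : ℝ) : ℂ)) *
    ((|ξ| ^ (-(2⁻¹) : ℝ) : ℝ) : ℂ) * (((1 + |ξ| ^ α) ^ (2⁻¹ : ℝ) : ℝ) : ℂ) *
    (((1 + ξ ^ 2) ^ (-(β / 2)) : ℝ) : ℂ) *
    Complex.exp (-Complex.I * ((t * ξ / (1 + |ξ| ^ α) : ℝ) : ℂ)) *
    Complex.exp (Complex.I * (((x + y ^ 2 / (4 * t)) * ξ : ℝ) : ℂ)) *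
    Complex.exp (Complex.I * ((y ^ 2 / (4 * t) * (ξ * |ξ| ^ α) : ℝ) : ℂ))

/-- The KP-BBM antiderivative kernel `Ã(t,x,y)`. -/
noncomputable def Atilde (α β t x y : ℝ) : ℂ :=
  ((t ^ (-(2⁻¹) : ℝ) : ℝ) : ℂ) * ∫ ξ : ℝ, AtildeInt α β t x y ξ

/-- The `ξ`-integrand of `∂ₓÃ(t,x,y)`. -/
noncomputable def GtildeInt (α β t x y : ℝ) (ξ : ℝ) : ℂ :=
  Complex.exp (-Complex.I * (Real.sign ξ : ℂ) * ((Real.pi / 4 : ℝ) : ℂ)) *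
    ((|ξ| ^ (2⁻¹ : ℝ) : ℝ) : ℂ) * (((1 + |ξ| ^ α) ^ (2⁻¹ : ℝ) : ℝ) : ℂ) *
    (((1 + ξ ^ 2) ^ (-(β / 2)) : ℝ) : ℂ) *
    Complex.exp (-Complex.I * ((t * ξ / (1 + |ξ| ^ α) : ℝ) : ℂ)) *
    Complex.exp (Complex.I * (((x + y ^ 2 / (4 * t)) * ξ : ℝ) : ℂ)) *
    Complex.exp (Complex.I * ((y ^ 2 / (4 * t) * (ξ * |ξ| ^ α) : ℝ) : ℂ))

/-- The `x`-derivative kernel `∂ₓÃ(t,x,y)`. -/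
noncomputable def Gtilde (α β t x y : ℝ) : ℂ :=
  Complex.I * ((t ^ (-(2⁻¹) : ℝ) : ℝ) : ℂ) * ∫ ξ : ℝ, GtildeInt α β t x y ξ

/-!
Both kernels are superpositions `∫ e^{i(xξ + φ(y, ξ))} a(ξ) dξ` of plane waves in `x`, with
amplitudes `a(ξ)` for `Ã` and `iξ a(ξ)` for `∂ₓÃ`. For `α > 0` their moduli behave like `|ξ| ^
(∓1/2)` near `0` and like `|ξ| ^ (α/2 - β ∓ 1/2)` at infinity, hence they are integrable when `β >
(α + 3)/2`. Dominated convergence gives boundedness, continuity and the formula for `∂ₓÃ`, and the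
Riemann–Lebesgue lemma, applied for fixed `y`, gives `Ã(t, x, y) → 0` as `|x| → ∞`. By dominated
convergence this decay passes to `Ã ⋆ ψ`, which is a primitive in `x` of `∂ₓÃ ⋆ ψ`, so the
improper integral of the latter is the difference of two vanishing limits.
-/

open Set Topology
open scoped Convolution

section PowerWeights

variable {E : Type*} [NormedAddCommGroup E] [NormedSpace ℝ E] [FiniteDimensional ℝ E]
  [Nontrivial E] [MeasurableSpace E] [BorelSpace E] {μ : Measure E} [μ.IsAddHaarMeasure]
  {p α β : ℝ}

lemma one_add_sq_rpow_neg_half_le {x : ℝ} (hβ : 0 ≤ β) (hx : 0 < x) :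
    (1 + x ^ 2) ^ (-(β / 2)) ≤ x ^ (-β) :=
  calc (1 + x ^ 2) ^ (-(β / 2)) ≤ (x ^ 2) ^ (-(β / 2)) :=
        Real.rpow_le_rpow_of_nonpos (by positivity) (by linarith) (by linarith)
    _ = x ^ (-β) := by
        rw [← Real.rpow_natCast_mul hx.le]
        congr 1
        push_cast
        ring

/-- In polar coordinates this is the convergence of the Mellin transform of `(1 + x²) ^ (-β / 2)`
at `r + dim E`. -/
lemma integrable_norm_rpow_mul_one_add_norm_sq_rpow
    (hp : -(Module.finrank ℝ E : ℝ) < p) (hβ : p + Module.finrank ℝ E < β) :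
    Integrable (fun x : E => ‖x‖ ^ p * (1 + ‖x‖ ^ 2) ^ (-(β / 2))) μ := by
  have hcont : Continuous fun x : ℝ => (1 + x ^ 2) ^ (-(β / 2)) :=
    (by fun_prop : Continuous fun x : ℝ => 1 + x ^ 2).rpow_const
      fun x => Or.inl (by positivity)
  have hzero : (fun x : ℝ => (1 + x ^ 2) ^ (-(β / 2))) =O[𝓝[>] 0] (· ^ (-0 : ℝ)) := by
    simpa only [neg_zero, Real.rpow_zero] using
      (hcont.tendsto 0).isBigO_one ℝ |>.mono nhdsWithin_le_nhds
  have htop : (fun x : ℝ => (1 + x ^ 2) ^ (-(β / 2))) =O[atTop] (· ^ (-β)) := by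
    refine Asymptotics.IsBigO.of_norm_eventuallyLE ?_
    filter_upwards [eventually_gt_atTop 0] with x hx
    rw [Real.norm_of_nonneg (by positivity)]
    exact one_add_sq_rpow_neg_half_le (by linarith) hx
  have hmellin := mellin_convergent_of_isBigO_scalar (s := p + Module.finrank ℝ E)
    (hcont.locallyIntegrable.locallyIntegrableOn _) htop hβ hzero (by linarith)
  refine (integrable_fun_norm_addHaar μ (f := fun x => x ^ p * (1 + x ^ 2) ^ (-(β / 2)))).2
    (hmellin.congr_fun (fun x hx => ?_) measurableSet_Ioi)
  have hpow : x ^ (p + Module.finrank ℝ E - 1) = x ^ (Module.finrank ℝ E - 1) * x ^ p := by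
    rw [← Real.rpow_natCast, ← Real.rpow_add hx, Nat.cast_pred Module.finrank_pos]
    congr 1
    ring
  simp only [hpow, smul_eq_mul, mul_assoc]

/-- The radial profile `r ^ p (1 + r ^ α) ^ (1 / 2) (1 + r²) ^ (-β / 2)`. At `r = |ξ|` it is the
modulus of the integrand of `Ã` for `p = -1/2` and of `∂ₓÃ` for `p = 1/2`. -/
noncomputable def kernelWeight (p α β r : ℝ) : ℝ :=
  r ^ p * (1 + r ^ α) ^ (2⁻¹ : ℝ) * (1 + r ^ 2) ^ (-(β / 2))

lemma kernelWeight_nonneg {r : ℝ} (hr : 0 ≤ r) : 0 ≤ kernelWeight p α β r := by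
  unfold kernelWeight
  positivity

lemma measurable_kernelWeight (p α β : ℝ) : Measurable (kernelWeight p α β) := by
  unfold kernelWeight
  fun_prop

lemma kernelWeight_one_add {r : ℝ} (hp : 1 + p ≠ 0) (hr : 0 ≤ r) :
    kernelWeight (1 + p) α β r = r * kernelWeight p α β r := by
  rw [kernelWeight, kernelWeight, Real.rpow_one_add' hr hp]
  ring

lemma kernelWeight_le {r : ℝ} (hr : 0 < r) : kernelWeight p α β r ≤
    r ^ p * (1 + r ^ 2) ^ (-(β / 2)) + r ^ (p + α / 2) * (1 + r ^ 2) ^ (-(β / 2)) := by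
  have hsqrt : (1 + r ^ α) ^ (2⁻¹ : ℝ) ≤ 1 + r ^ (α / 2) :=
    calc (1 + r ^ α) ^ (2⁻¹ : ℝ) ≤ 1 ^ (2⁻¹ : ℝ) + (r ^ α) ^ (2⁻¹ : ℝ) :=
          Real.rpow_add_le_add_rpow zero_le_one (by positivity) (by norm_num) (by norm_num)
      _ = 1 + r ^ (α / 2) := by rw [Real.one_rpow, ← Real.rpow_mul hr.le, div_eq_mul_inv]
  calc kernelWeight p α β r ≤ r ^ p * (1 + r ^ (α / 2)) * (1 + r ^ 2) ^ (-(β / 2)) := by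
        unfold kernelWeight
        gcongr
    _ = _ := by
        rw [Real.rpow_add hr]
        ring

lemma integrable_kernelWeight_norm
    (hp : -(Module.finrank ℝ E : ℝ) < p + min α 0 / 2)
    (hβ : p + max α 0 / 2 + Module.finrank ℝ E < β) :
    Integrable (fun x : E => kernelWeight p α β ‖x‖) μ := by
  have hmin : min α 0 ≤ α ∧ min α 0 ≤ 0 := ⟨min_le_left α 0, min_le_right α 0⟩
  have hmax : α ≤ max α 0 ∧ 0 ≤ max α 0 := ⟨le_max_left α 0, le_max_right α 0⟩
  refine ((integrable_norm_rpow_mul_one_add_norm_sq_rpow (p := p) (β := β)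
    (by linarith) (by linarith)).add (integrable_norm_rpow_mul_one_add_norm_sq_rpow
      (p := p + α / 2) (β := β) (by linarith) (by linarith))).mono'
    ((measurable_kernelWeight p α β).comp measurable_norm).aestronglyMeasurable ?_
  filter_upwards [Measure.ae_ne μ 0] with x hx
  rw [Real.norm_of_nonneg (kernelWeight_nonneg (norm_nonneg x))]
  exact kernelWeight_le (norm_pos_iff.2 hx)

end PowerWeights

section OscillatoryKernel

variable {E Y : Type*} [NormedAddCommGroup E] [NormedSpace ℂ E] {a : ℝ → E} {φ : Y → ℝ → ℝ}

/-- The superposition `∫ e^{i(xξ + φ(y, ξ))} a(ξ) dξ` of plane waves in `x` with amplitude `a` and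
a phase `φ` depending on a parameter `y`. Both KP-BBM kernels have this form. -/
noncomputable def oscillatoryKernel (a : ℝ → E) (φ : Y → ℝ → ℝ) (x : ℝ) (y : Y) : E :=
  ∫ ξ, Complex.exp ((x * ξ + φ y ξ : ℝ) * Complex.I) • a ξ

lemma norm_exp_ofReal_mul_I_smul (θ : ℝ) (v : E) : ‖Complex.exp (θ * Complex.I) • v‖ = ‖v‖ := by
  rw [norm_smul, Complex.norm_exp_ofReal_mul_I, one_mul]

lemma aestronglyMeasurable_exp_phase_smul (ha : AEStronglyMeasurable a)
    (hφ : ∀ y, Measurable (φ y)) (x : ℝ) (y : Y) :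
    AEStronglyMeasurable fun ξ => Complex.exp ((x * ξ + φ y ξ : ℝ) * Complex.I) • a ξ := by
  have := hφ y
  exact AEStronglyMeasurable.smul (by fun_prop) ha

lemma integrable_exp_phase_smul (ha : Integrable a) (hφ : ∀ y, Measurable (φ y)) (x : ℝ) (y : Y) :
    Integrable fun ξ => Complex.exp ((x * ξ + φ y ξ : ℝ) * Complex.I) • a ξ :=
  ha.mono (aestronglyMeasurable_exp_phase_smul ha.1 hφ x y)
    (.of_forall fun ξ => (norm_exp_ofReal_mul_I_smul _ (a ξ)).le)

lemma norm_oscillatoryKernel_le (a : ℝ → E) (φ : Y → ℝ → ℝ) (x : ℝ) (y : Y) :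
    ‖oscillatoryKernel a φ x y‖ ≤ ∫ ξ, ‖a ξ‖ :=
  (norm_integral_le_integral_norm _).trans_eq
    (integral_congr_ae (.of_forall fun ξ => norm_exp_ofReal_mul_I_smul _ (a ξ)))

lemma continuous_oscillatoryKernel [TopologicalSpace Y] [FirstCountableTopology Y]
    (ha : Integrable a) (hφ : ∀ y, Measurable (φ y)) (hφ' : ∀ ξ, Continuous (φ · ξ)) :
    Continuous fun q : ℝ × Y => oscillatoryKernel a φ q.1 q.2 :=
  continuous_of_dominated (fun q => aestronglyMeasurable_exp_phase_smul ha.1 hφ q.1 q.2)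
    (fun q => .of_forall fun ξ => (norm_exp_ofReal_mul_I_smul _ (a ξ)).le) ha.norm
    (.of_forall fun ξ => by have := hφ' ξ; fun_prop)

lemma hasDerivAt_exp_phase_smul (θ ξ : ℝ) (v : E) (x : ℝ) :
    HasDerivAt (fun x : ℝ => Complex.exp ((x * ξ + θ : ℝ) * Complex.I) • v)
      (Complex.I • Complex.exp ((x * ξ + θ : ℝ) * Complex.I) • (ξ : ℂ) • v) x := by
  have hphase : HasDerivAt (fun x : ℝ => ((x * ξ + θ : ℝ) : ℂ) * Complex.I) (ξ * Complex.I) x := by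
    simpa only [id_eq, one_mul] using
      (((hasDerivAt_id x).mul_const ξ).add_const θ).ofReal_comp.mul_const Complex.I
  convert hphase.cexp.smul_const v using 1
  simp only [smul_smul]
  ring_nf

lemma hasDerivAt_oscillatoryKernel (ha : Integrable a)
    (ha' : Integrable fun ξ : ℝ => (ξ : ℂ) • a ξ) (hφ : ∀ y, Measurable (φ y)) (x : ℝ) (y : Y) :
    HasDerivAt (fun x => oscillatoryKernel a φ x y)
      (Complex.I • oscillatoryKernel (fun ξ : ℝ => (ξ : ℂ) • a ξ) φ x y) x := by
  rw [oscillatoryKernel, ← integral_smul]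
  refine (hasDerivAt_integral_of_dominated_loc_of_deriv_le
    (bound := fun ξ : ℝ => ‖(ξ : ℂ) • a ξ‖) univ_mem
    (.of_forall fun x => aestronglyMeasurable_exp_phase_smul ha.1 hφ x y)
    (integrable_exp_phase_smul ha hφ x y)
    ((aestronglyMeasurable_exp_phase_smul ha'.1 hφ x y).const_smul Complex.I)
    (.of_forall fun (ξ : ℝ) x _ => ?_) ha'.norm
    (.of_forall fun ξ x _ => hasDerivAt_exp_phase_smul (φ y ξ) ξ (a ξ) x)).2
  rw [norm_smul, Complex.norm_I, one_mul, norm_exp_ofReal_mul_I_smul]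

lemma tendsto_oscillatoryKernel_cocompact (a : ℝ → E) (φ : Y → ℝ → ℝ) (y : Y) :
    Tendsto (oscillatoryKernel a φ · y) (cocompact ℝ) (𝓝 0) := by
  have hscale : Tendsto (fun x : ℝ => x * (-(2 * Real.pi)⁻¹)) (cocompact ℝ) (cocompact ℝ) :=
    (Homeomorph.mulRight₀ _ (by simp [Real.pi_ne_zero])).isClosedEmbedding.tendsto_cocompact
  refine ((Real.tendsto_integral_exp_smul_cocompact fun ξ =>
    Complex.exp (φ y ξ * Complex.I) • a ξ).comp hscale).congr fun x =>
    integral_congr_ae (.of_forall fun ξ => ?_)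
  have hfreq : 2 * Real.pi * -(ξ * (x * -(2 * Real.pi)⁻¹)) = x * ξ := by field_simp
  simp only [Circle.smul_def, Real.fourierChar_apply, hfreq, smul_smul, ← Complex.exp_add]
  push_cast
  ring_nf

end OscillatoryKernel

section ImproperIntegral

variable {E : Type*} [NormedAddCommGroup E] [NormedSpace ℝ E] [CompleteSpace E] {F F' : ℝ → E}

lemma tendsto_intervalIntegral_of_hasDerivAt_of_tendsto {m n : E}
    (hderiv : ∀ x, HasDerivAt F (F' x) x) (hint : ∀ a b, IntervalIntegrable F' volume a b)
    (hbot : Tendsto F atBot (𝓝 m)) (htop : Tendsto F atTop (𝓝 n)) :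
    Tendsto (fun ab : ℝ × ℝ => ∫ x in ab.1..ab.2, F' x) (atBot ×ˢ atTop) (𝓝 (n - m)) := by
  simp only [fun a b => intervalIntegral.integral_eq_sub_of_hasDerivAt
    (fun x _ => hderiv x) (hint a b)]
  exact (htop.comp tendsto_snd).sub (hbot.comp tendsto_fst)

end ImproperIntegral

section Convolution

variable {G E E' F : Type*} [NormedAddCommGroup E] [NormedAddCommGroup E'] [NormedAddCommGroup F]
  [NormedSpace ℝ E] [NormedSpace ℝ E'] [NormedSpace ℝ F] (L : E →L[ℝ] E' →L[ℝ] F)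
  [AddGroup G] [TopologicalSpace G] [IsTopologicalAddGroup G] [MeasurableSpace G] [BorelSpace G]
  [SecondCountableTopologyEither G E'] {μ : Measure G} {f : G → E} {g g' : G → E'} {C C' : ℝ}

lemma tendsto_convolution_zero {ι : Type*} {l : Filter ι} [l.IsCountablyGenerated] {z : ι → G}
    (hf : Integrable f μ) (hg : Continuous g) (hgC : ∀ q, ‖g q‖ ≤ C)
    (hlim : ∀ p, Tendsto (fun i => g (z i - p)) l (𝓝 0)) :
    Tendsto (fun i => (f ⋆[L, μ] g) (z i)) l (𝓝 0) := by
  rw [← integral_zero G F]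
  refine tendsto_integral_filter_of_dominated_convergence (fun p => ‖L‖ * ‖f p‖ * C)
    (.of_forall fun i => hf.1.convolution_integrand_snd' L hg.aestronglyMeasurable)
    (.of_forall fun i => .of_forall fun p => L.le_of_opNorm₂_le_of_le le_rfl le_rfl (hgC _))
    ((hf.norm.const_mul _).mul_const _) (.of_forall fun p => ?_)
  simpa only [Function.comp_def, map_zero] using ((L (f p)).continuous.tendsto 0).comp (hlim p)

lemma hasDerivAt_convolution_of_hasDerivAt {z : ℝ → G} (hf : Integrable f μ)
    (hg : Continuous g) (hgC : ∀ q, ‖g q‖ ≤ C) (hg' : Continuous g') (hgC' : ∀ q, ‖g' q‖ ≤ C')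
    (hderiv : ∀ p x, HasDerivAt (fun x => g (z x - p)) (g' (z x - p)) x) (x : ℝ) :
    HasDerivAt (fun x => (f ⋆[L, μ] g) (z x)) ((f ⋆[L, μ] g') (z x)) x := by
  have hmeas (x : ℝ) : AEStronglyMeasurable (fun p => L (f p) (g (z x - p))) μ :=
    hf.1.convolution_integrand_snd' L hg.aestronglyMeasurable
  have hint : Integrable (fun p => L (f p) (g (z x - p))) μ :=
    ((hf.norm.const_mul ‖L‖).mul_const C).mono' (hmeas x)
      (.of_forall fun p => L.le_of_opNorm₂_le_of_le le_rfl le_rfl (hgC _))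
  exact (hasDerivAt_integral_of_dominated_loc_of_deriv_le
    (F' := fun x p => L (f p) (g' (z x - p))) (bound := fun p => ‖L‖ * ‖f p‖ * C')
    univ_mem (.of_forall hmeas) hint
    (hf.1.convolution_integrand_snd' L hg'.aestronglyMeasurable)
    (.of_forall fun p x _ => L.le_of_opNorm₂_le_of_le le_rfl le_rfl (hgC' _))
    ((hf.norm.const_mul _).mul_const _)
    (.of_forall fun p x _ => (L (f p)).hasFDerivAt.comp_hasDerivAt x (hderiv p x))).2

lemma tendsto_intervalIntegral_convolution_zero [FirstCountableTopology G] [CompleteSpace F]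
    {z : ℝ → G} (hz : Continuous z) (hf : Integrable f μ)
    (hg : Continuous g) (hgC : ∀ q, ‖g q‖ ≤ C) (hg' : Continuous g') (hgC' : ∀ q, ‖g' q‖ ≤ C')
    (hderiv : ∀ p x, HasDerivAt (fun x => g (z x - p)) (g' (z x - p)) x)
    (hbot : ∀ p, Tendsto (fun x => g (z x - p)) atBot (𝓝 0))
    (htop : ∀ p, Tendsto (fun x => g (z x - p)) atTop (𝓝 0)) :
    Tendsto (fun ab : ℝ × ℝ => ∫ x in ab.1..ab.2, (f ⋆[L, μ] g') (z x)) (atBot ×ˢ atTop)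
      (𝓝 0) := by
  have hcont : Continuous (f ⋆[L, μ] g') :=
    BddAbove.continuous_convolution_right_of_integrable L ⟨C', forall_mem_range.2 hgC'⟩ hf hg'
  simpa only [sub_zero] using tendsto_intervalIntegral_of_hasDerivAt_of_tendsto
    (hasDerivAt_convolution_of_hasDerivAt L hf hg hgC hg' hgC' hderiv)
    (hcont.comp hz).intervalIntegrable
    (tendsto_convolution_zero L hf hg hgC hbot) (tendsto_convolution_zero L hf hg hgC htop)

end Convolution

section Kernel

variable {α β t : ℝ}

lemma measurable_real_sign : Measurable Real.sign :=
  .ite measurableSet_Iio measurable_const (.ite measurableSet_Ioi measurable_const measurable_const)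

lemma real_sign_mul_abs_rpow_mul_self {p : ℝ} (hp : 1 + p ≠ 0) (x : ℝ) :
    x.sign * |x| ^ p * x = |x| ^ (1 + p) := by
  have hsign : x.sign * x = |x| := by
    rcases lt_trichotomy x 0 with hx | rfl | hx
    · rw [Real.sign_of_neg hx, abs_of_neg hx, neg_one_mul]
    · simp only [mul_zero, abs_zero]
    · rw [Real.sign_of_pos hx, abs_of_pos hx, one_mul]
  rw [mul_right_comm, hsign, Real.rpow_one_add' (abs_nonneg x) hp]

/-- The amplitude of `Ã(t, ·, ·)` as an oscillatory kernel: the factors of `AtildeInt` that depend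
neither on `x` nor on `y`. -/
noncomputable def kernelAmplitude (α β t ξ : ℝ) : ℂ :=
  (Real.sign ξ : ℂ) *
    Complex.exp (-Complex.I * (Real.sign ξ : ℂ) * ((Real.pi / 4 : ℝ) : ℂ)) *
    ((|ξ| ^ (-(2⁻¹) : ℝ) : ℝ) : ℂ) * (((1 + |ξ| ^ α) ^ (2⁻¹ : ℝ) : ℝ) : ℂ) *
    (((1 + ξ ^ 2) ^ (-(β / 2)) : ℝ) : ℂ) *
    Complex.exp (-Complex.I * ((t * ξ / (1 + |ξ| ^ α) : ℝ) : ℂ))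

/-- The `y`-dependent part of the phase of `Ã(t, ·, ·)` and of `∂ₓÃ(t, ·, ·)`. -/
noncomputable def kernelPhase (α t y ξ : ℝ) : ℝ := y ^ 2 / (4 * t) * (ξ + ξ * |ξ| ^ α)

lemma measurable_kernelPhase (α t y : ℝ) : Measurable (kernelPhase α t y) := by
  unfold kernelPhase
  fun_prop

lemma continuous_kernelPhase (α t ξ : ℝ) : Continuous (kernelPhase α t · ξ) := by
  unfold kernelPhase
  fun_prop

lemma atildeInt_eq (α β t x y : ℝ) : AtildeInt α β t x y = fun ξ =>
    Complex.exp ((x * ξ + kernelPhase α t y ξ : ℝ) * Complex.I) • kernelAmplitude α β t ξ := by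
  ext ξ
  have hphase : Complex.exp ((x * ξ + kernelPhase α t y ξ : ℝ) * Complex.I) =
      Complex.exp (Complex.I * (((x + y ^ 2 / (4 * t)) * ξ : ℝ) : ℂ)) *
        Complex.exp (Complex.I * ((y ^ 2 / (4 * t) * (ξ * |ξ| ^ α) : ℝ) : ℂ)) := by
    rw [← Complex.exp_add, kernelPhase]
    push_cast
    ring_nf
  rw [hphase, AtildeInt, kernelAmplitude, smul_eq_mul]
  ring

lemma gtildeInt_eq_mul_atildeInt (α β t x y ξ : ℝ) :
    GtildeInt α β t x y ξ = ξ * AtildeInt α β t x y ξ := by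
  have hsign : ((|ξ| ^ (2⁻¹ : ℝ) : ℝ) : ℂ) =
      (Real.sign ξ : ℂ) * ((|ξ| ^ (-(2⁻¹) : ℝ) : ℝ) : ℂ) * ξ := by
    rw [← Complex.ofReal_mul, ← Complex.ofReal_mul,
      real_sign_mul_abs_rpow_mul_self (by norm_num)]
    norm_num
  rw [GtildeInt, AtildeInt, hsign]
  ring

lemma gtildeInt_eq (α β t x y : ℝ) : GtildeInt α β t x y = fun ξ : ℝ =>
    Complex.exp ((x * ξ + kernelPhase α t y ξ : ℝ) * Complex.I) •
      (ξ : ℂ) • kernelAmplitude α β t ξ := by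
  ext ξ
  rw [gtildeInt_eq_mul_atildeInt, atildeInt_eq, ← smul_eq_mul, smul_comm]

lemma atilde_eq (α β t x y : ℝ) : Atilde α β t x y =
    ((t ^ (-(2⁻¹) : ℝ) : ℝ) : ℂ) *
      oscillatoryKernel (kernelAmplitude α β t) (kernelPhase α t) x y := by
  rw [Atilde, atildeInt_eq, oscillatoryKernel]

lemma gtilde_eq (α β t x y : ℝ) : Gtilde α β t x y =
    Complex.I * ((t ^ (-(2⁻¹) : ℝ) : ℝ) : ℂ) *
      oscillatoryKernel (fun ξ : ℝ => (ξ : ℂ) • kernelAmplitude α β t ξ) (kernelPhase α t) x y := by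
  rw [Gtilde, gtildeInt_eq, oscillatoryKernel]

lemma measurable_kernelAmplitude (α β t : ℝ) : Measurable (kernelAmplitude α β t) := by
  have := measurable_real_sign
  unfold kernelAmplitude
  fun_prop

lemma norm_exp_neg_I_mul_ofReal (θ : ℝ) : ‖Complex.exp (-Complex.I * θ)‖ = 1 := by
  simpa only [Complex.ofReal_neg, neg_mul_comm] using Complex.norm_exp_I_mul_ofReal (-θ)

lemma norm_kernelAmplitude_le (α β t ξ : ℝ) :
    ‖kernelAmplitude α β t ξ‖ ≤ kernelWeight (-2⁻¹) α β ‖ξ‖ := by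
  have hsign : ‖Real.sign ξ‖ ≤ 1 := by
    rcases Real.sign_apply_eq ξ with h | h | h <;> simp [h]
  have hnorm : ‖kernelAmplitude α β t ξ‖ = ‖Real.sign ξ‖ * kernelWeight (-2⁻¹) α β ‖ξ‖ := by
    rw [kernelAmplitude, mul_assoc (-Complex.I), ← Complex.ofReal_mul, kernelWeight]
    simp only [norm_mul, norm_exp_neg_I_mul_ofReal, Complex.norm_real, mul_one, mul_assoc]
    rw [Real.norm_of_nonneg (by positivity : 0 ≤ |ξ| ^ (-(2⁻¹) : ℝ)),
      Real.norm_of_nonneg (by positivity : 0 ≤ (1 + |ξ| ^ α) ^ (2⁻¹ : ℝ)),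
      Real.norm_of_nonneg (by positivity : 0 ≤ (1 + ξ ^ 2) ^ (-(β / 2))),
      Real.norm_eq_abs ξ, sq_abs, one_mul]
  rw [hnorm]
  exact mul_le_of_le_one_left (kernelWeight_nonneg (norm_nonneg ξ)) hsign

lemma integrable_kernelAmplitude (hα : -1 < α) (hβ : (max α 0 + 1) / 2 < β) :
    Integrable (kernelAmplitude α β t) := by
  have hmin : -1 < min α 0 := lt_min hα (by norm_num)
  have hdim : (Module.finrank ℝ ℝ : ℝ) = 1 := by rw [Module.finrank_self, Nat.cast_one]
  exact (integrable_kernelWeight_norm (p := -2⁻¹) (α := α) (β := β)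
    (by linarith) (by linarith)).mono'
    (measurable_kernelAmplitude α β t).aestronglyMeasurable
    (.of_forall (norm_kernelAmplitude_le α β t))

lemma integrable_smul_kernelAmplitude (hα : -3 < α) (hβ : (max α 0 + 3) / 2 < β) :
    Integrable fun ξ : ℝ => (ξ : ℂ) • kernelAmplitude α β t ξ := by
  have hmin : -3 < min α 0 := lt_min hα (by norm_num)
  have hdim : (Module.finrank ℝ ℝ : ℝ) = 1 := by rw [Module.finrank_self, Nat.cast_one]
  refine (integrable_kernelWeight_norm (p := 1 + -2⁻¹) (α := α) (β := β)
    (by linarith) (by linarith)).mono'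
    (Complex.measurable_ofReal.smul (measurable_kernelAmplitude α β t)).aestronglyMeasurable
    (.of_forall fun ξ => ?_)
  rw [norm_smul, Complex.norm_real, kernelWeight_one_add (by norm_num) (norm_nonneg ξ)]
  gcongr
  exact norm_kernelAmplitude_le α β t ξ

lemma integrable_atildeInt (hα : -1 < α) (hβ : (max α 0 + 1) / 2 < β) (x y : ℝ) :
    Integrable (AtildeInt α β t x y) := by
  rw [atildeInt_eq]
  exact integrable_exp_phase_smul (integrable_kernelAmplitude hα hβ)
    (measurable_kernelPhase α t) x y

lemma integrable_gtildeInt (hα : -3 < α) (hβ : (max α 0 + 3) / 2 < β) (x y : ℝ) :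
    Integrable (GtildeInt α β t x y) := by
  rw [gtildeInt_eq]
  exact integrable_exp_phase_smul (integrable_smul_kernelAmplitude hα hβ)
    (measurable_kernelPhase α t) x y

lemma continuous_atilde (hα : -1 < α) (hβ : (max α 0 + 1) / 2 < β) :
    Continuous fun q : ℝ × ℝ => Atilde α β t q.1 q.2 := by
  simp only [atilde_eq]
  exact (continuous_oscillatoryKernel (integrable_kernelAmplitude hα hβ)
    (measurable_kernelPhase α t) (continuous_kernelPhase α t)).const_mul _

lemma continuous_gtilde (hα : -3 < α) (hβ : (max α 0 + 3) / 2 < β) :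
    Continuous fun q : ℝ × ℝ => Gtilde α β t q.1 q.2 := by
  simp only [gtilde_eq]
  exact (continuous_oscillatoryKernel (integrable_smul_kernelAmplitude hα hβ)
    (measurable_kernelPhase α t) (continuous_kernelPhase α t)).const_mul _

lemma exists_norm_atilde_le (α β t : ℝ) : ∃ C, ∀ x y, ‖Atilde α β t x y‖ ≤ C :=
  ⟨_, fun x y => by
    rw [atilde_eq, norm_mul]
    exact mul_le_mul_of_nonneg_left (norm_oscillatoryKernel_le _ _ x y) (norm_nonneg _)⟩

lemma exists_norm_gtilde_le (α β t : ℝ) : ∃ C, ∀ x y, ‖Gtilde α β t x y‖ ≤ C :=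
  ⟨_, fun x y => by
    rw [gtilde_eq, norm_mul]
    exact mul_le_mul_of_nonneg_left (norm_oscillatoryKernel_le _ _ x y) (norm_nonneg _)⟩

lemma hasDerivAt_atilde (hα : -1 < α) (hβ : (max α 0 + 3) / 2 < β) (x y : ℝ) :
    HasDerivAt (fun x => Atilde α β t x y) (Gtilde α β t x y) x := by
  simp only [atilde_eq, gtilde_eq]
  refine ((hasDerivAt_oscillatoryKernel (integrable_kernelAmplitude hα (by linarith))
    (integrable_smul_kernelAmplitude (by linarith) hβ)
    (measurable_kernelPhase α t) x y).const_mul _).congr_deriv ?_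
  rw [smul_eq_mul]
  ring

lemma tendsto_atilde_cocompact (α β t y : ℝ) :
    Tendsto (fun x => Atilde α β t x y) (cocompact ℝ) (𝓝 0) := by
  simp only [atilde_eq]
  simpa only [mul_zero] using
    (tendsto_oscillatoryKernel_cocompact (kernelAmplitude α β t) (kernelPhase α t) y).const_mul _

lemma tendsto_sub_const_cocompact {G : Type*} [AddGroup G] [TopologicalSpace G]
    [IsTopologicalAddGroup G] (c : G) : Tendsto (· - c) (cocompact G) (cocompact G) :=
  (Homeomorph.subRight c).isClosedEmbedding.tendsto_cocompact

lemma tendsto_atilde_convolution (hα : -1 < α) (hβ : (max α 0 + 1) / 2 < β)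
    {ψ : ℝ × ℝ → ℂ} (hψ : Integrable ψ) (y : ℝ) :
    Tendsto (fun x : ℝ => ∫ p : ℝ × ℝ, Atilde α β t (x - p.1) (y - p.2) * ψ p)
      (cocompact ℝ) (𝓝 0) := by
  obtain ⟨C, hC⟩ := exists_norm_atilde_le α β t
  have : (cocompact ℝ).IsCountablyGenerated := by
    rw [cocompact_eq_atBot_atTop]
    infer_instance
  exact tendsto_convolution_zero (ContinuousLinearMap.mul ℝ ℂ).flip (μ := volume)
    (g := fun q : ℝ × ℝ => Atilde α β t q.1 q.2) (z := fun x => (x, y)) hψ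
    (continuous_atilde hα hβ) (fun q => hC q.1 q.2) fun p =>
      (tendsto_atilde_cocompact α β t (y - p.2)).comp (tendsto_sub_const_cocompact p.1)

lemma tendsto_intervalIntegral_gtilde_convolution (hα : -1 < α) (hβ : (max α 0 + 3) / 2 < β)
    {ψ : ℝ × ℝ → ℂ} (hψ : Integrable ψ) (y : ℝ) :
    Tendsto (fun ab : ℝ × ℝ =>
        ∫ x in ab.1..ab.2, ∫ p : ℝ × ℝ, Gtilde α β t (x - p.1) (y - p.2) * ψ p)
      (atBot ×ˢ atTop) (𝓝 0) := by
  obtain ⟨C, hC⟩ := exists_norm_atilde_le α β t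
  obtain ⟨C', hC'⟩ := exists_norm_gtilde_le α β t
  have hlim (p : ℝ × ℝ) := (tendsto_atilde_cocompact α β t (y - p.2)).comp
    (tendsto_sub_const_cocompact p.1)
  simp only [cocompact_eq_atBot_atTop, tendsto_sup] at hlim
  exact tendsto_intervalIntegral_convolution_zero (ContinuousLinearMap.mul ℝ ℂ).flip
    (μ := volume) (g := fun q : ℝ × ℝ => Atilde α β t q.1 q.2)
    (g' := fun q : ℝ × ℝ => Gtilde α β t q.1 q.2) (z := fun x => (x, y)) (by fun_prop) hψ
    (continuous_atilde hα (by linarith)) (fun q => hC q.1 q.2)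
    (continuous_gtilde (by linarith) hβ) (fun q => hC' q.1 q.2)
    (fun p x => (hasDerivAt_atilde hα hβ (x - p.1) (y - p.2)).comp_sub_const x p.1)
    (fun p => (hlim p).1) (fun p => (hlim p).2)

end Kernel

theorem KPBBM_kernel_properties_general (α β t : ℝ) (hα : -1 < α)
    (hβ : (max α 0 + 3) / 2 < β) (_ht : 0 < t) :
    (∀ x y : ℝ, Integrable (AtildeInt α β t x y)) ∧
    (∀ x y : ℝ, Integrable (GtildeInt α β t x y)) ∧
    Continuous (fun q : ℝ × ℝ => Atilde α β t q.1 q.2) ∧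
    (∃ C : ℝ, ∀ x y : ℝ, ‖Atilde α β t x y‖ ≤ C) ∧
    (∀ y x : ℝ, HasDerivAt (fun x' : ℝ => Atilde α β t x' y) (Gtilde α β t x y) x) ∧
    Continuous (fun q : ℝ × ℝ => Gtilde α β t q.1 q.2) ∧
    (∃ C : ℝ, ∀ x y : ℝ, ‖Gtilde α β t x y‖ ≤ C) ∧
    (∀ ψ : ℝ × ℝ → ℂ, Integrable ψ → ∀ y : ℝ,
      Tendsto (fun x : ℝ => ∫ p : ℝ × ℝ, Atilde α β t (x - p.1) (y - p.2) * ψ p)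
        (cocompact ℝ) (nhds 0)) ∧
    (∀ ψ : ℝ × ℝ → ℂ, Integrable ψ → ∀ y : ℝ,
      Tendsto
        (fun ab : ℝ × ℝ =>
          ∫ x in ab.1..ab.2, ∫ p : ℝ × ℝ, Gtilde α β t (x - p.1) (y - p.2) * ψ p)
        (atBot ×ˢ atTop) (nhds 0)) := by
  have hβ' : (max α 0 + 1) / 2 < β := by linarith
  have hα' : -3 < α := by linarith
  exact ⟨integrable_atildeInt hα hβ', integrable_gtildeInt hα' hβ, continuous_atilde hα hβ',
    exists_norm_atilde_le α β t, fun y x => hasDerivAt_atilde hα hβ x y,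
    continuous_gtilde hα' hβ, exists_norm_gtilde_le α β t,
    fun _ hψ => tendsto_atilde_convolution hα hβ' hψ,
    fun _ hψ => tendsto_intervalIntegral_gtilde_convolution hα hβ hψ⟩

/-- KP-BBM antiderivative kernel: for `α > 0`, `β > (α+3)/2`, `t > 0`, the kernel `Ã` is
(absolutely convergent,) continuous and bounded, differentiable in `x` with derivative the
continuous bounded kernel `∂ₓÃ`, and for `ψ ∈ L¹(ℝ²)` the convolution `Ã ⋆ ψ` tends to `0`
as `|x| → ∞`; consequently the generalized Riemann integral in `x` of `(∂ₓÃ) ⋆ ψ`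
vanishes for every `y`. -/
theorem KPBBM_kernel_properties (α β t : ℝ) (hα : 0 < α) (hβ : (α + 3) / 2 < β)
    (ht : 0 < t) :
    (∀ x y : ℝ, Integrable (AtildeInt α β t x y)) ∧
    (∀ x y : ℝ, Integrable (GtildeInt α β t x y)) ∧
    Continuous (fun q : ℝ × ℝ => Atilde α β t q.1 q.2) ∧
    (∃ C : ℝ, ∀ x y : ℝ, ‖Atilde α β t x y‖ ≤ C) ∧
    (∀ y x : ℝ, HasDerivAt (fun x' : ℝ => Atilde α β t x' y) (Gtilde α β t x y) x) ∧
    Continuous (fun q : ℝ × ℝ => Gtilde α β t q.1 q.2) ∧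
    (∃ C : ℝ, ∀ x y : ℝ, ‖Gtilde α β t x y‖ ≤ C) ∧
    (∀ ψ : ℝ × ℝ → ℂ, Integrable ψ → ∀ y : ℝ,
      Tendsto (fun x : ℝ => ∫ p : ℝ × ℝ, Atilde α β t (x - p.1) (y - p.2) * ψ p)
        (cocompact ℝ) (nhds 0)) ∧
    (∀ ψ : ℝ × ℝ → ℂ, Integrable ψ → ∀ y : ℝ,
      Tendsto
        (fun ab : ℝ × ℝ =>
          ∫ x in ab.1..ab.2, ∫ p : ℝ × ℝ, Gtilde α β t (x - p.1) (y - p.2) * ψ p)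
        (atBot ×ˢ atTop) (nhds 0)) :=
  KPBBM_kernel_properties_general α β t (by linarith) (by rwa [max_eq_left hα.le]) ht
end
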